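/- arXiv:1907.03114 — 3 statements merged into one kernel-verified Lean document; each statement's English description precedes it below -/
import Mathlib

section
/- Let r > 0. There exists a constant C > 0 such that for every Schwartz function f : ℝ³ → ℂ whose Fourier transform satisfies 𝓕f(ξ) = 0 for all ξ with |ξ| > r, one has ∫_{ℝ³} (1+|x|)|f(x)|³ dx ≤ C (‖f‖_{L²}³ + ‖f‖_{L²}² ‖|x|∇f‖_{L²}). -/
open MeasureTheory FourierTransform
open scoped ENNReal NNReal SchwartzMap

noncomputable section

local notation "E³" => EuclideanSpace ℝ (Fin 3)

/-!
Replace the weight `|x|` by the smooth weight `w = √(1 + |x|²) - 1`, which differs from it by at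
most `1`. Since `|∇w| ≤ 1` and `w ≤ |x|`, the gradient of `w |f|²` is bounded by
`|f|² + 2 |f| |x| |∇f|`, so the Gagliardo–Nirenberg–Sobolev inequality in dimension `n ≥ 2` puts
`w |f|²` in `L^{n/(n-1)}` with norm `O(‖f‖₂² + ‖f‖₂ ‖|x|∇f‖₂)`. Pair this with the remaining factor
`|f|` in `L^n`: the Fourier transform of `f` lives on a set of finite measure, so Bernstein's
inequality bounds `‖f‖_∞`, and hence every `‖f‖_p` with `p ≥ 2`, by a multiple of `‖f‖₂`.
-/

open Filter Module Topology

section Lebesgue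

variable {α F G : Type*} {m : MeasurableSpace α} {μ : Measure α} [NormedAddCommGroup F]
  [NormedAddCommGroup G]

lemma lintegral_enorm_mul_enorm_le {f : α → F} {g : α → G} (hf : AEStronglyMeasurable f μ)
    (hg : AEStronglyMeasurable g μ) (p q : ℝ≥0∞) [p.HolderConjugate q] :
    ∫⁻ x, ‖f x‖ₑ * ‖g x‖ₑ ∂μ ≤ eLpNorm f p μ * eLpNorm g q μ := by
  simpa [eLpNorm_one_eq_lintegral_enorm, enorm_mul] using
    eLpNorm_le_eLpNorm_mul_eLpNorm'_of_norm (p := p) (q := q) (r := 1) hf hg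
      (fun a b ↦ ‖a‖ * ‖b‖) 1 (.of_forall fun x ↦ by simp)

lemma lintegral_enorm_pow_eq (f : α → F) {n : ℕ} (hn : n ≠ 0) :
    ∫⁻ x, ‖f x‖ₑ ^ n ∂μ = eLpNorm f n μ ^ n := by
  simpa using (eLpNorm_nnreal_pow_eq_lintegral (f := f) (μ := μ) (p := n) (by simpa)).symm

lemma lintegral_enorm_rpow_le {f : α → F} (hf : AEStronglyMeasurable f μ) {p q : ℝ} (hq : 0 ≤ q)
    (hqp : q ≤ p) :
    ∫⁻ x, ‖f x‖ₑ ^ p ∂μ ≤ eLpNorm f ∞ μ ^ (p - q) * ∫⁻ x, ‖f x‖ₑ ^ q ∂μ := by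
  rw [← lintegral_const_mul'' _ (hf.enorm.pow_const q)]
  refine lintegral_mono_ae ?_
  filter_upwards [enorm_ae_le_eLpNormEssSup f μ] with x hx
  have hp : p = (p - q) + q := by ring
  rw [hp, ENNReal.rpow_add_of_nonneg _ _ (sub_nonneg.2 hqp) hq, ← hp, eLpNorm_exponent_top]
  gcongr

lemma eLpNorm_le_mul_eLpNorm_of_eLpNorm_top_le {f : α → F} (hf : AEStronglyMeasurable f μ)
    {p q : ℝ≥0} (hq : q ≠ 0) (hqp : q ≤ p) {A : ℝ≥0∞} (hA : 1 ≤ A)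
    (h : eLpNorm f ∞ μ ≤ A * eLpNorm f q μ) :
    eLpNorm f p μ ≤ A * eLpNorm f q μ := by
  -- Interpolate between `L^q` and `L^∞`, where both norms are at most `A * eLpNorm f q μ`.
  have hp : p ≠ 0 := (hq.bot_lt.trans_le hqp).ne'
  have hsub : (0 : ℝ) ≤ p - q := sub_nonneg.2 (NNReal.coe_le_coe.2 hqp)
  rw [← ENNReal.rpow_le_rpow_iff (z := p) (by positivity)]
  calc eLpNorm f p μ ^ (p : ℝ)
      ≤ eLpNorm f ∞ μ ^ (p - q : ℝ) * eLpNorm f q μ ^ (q : ℝ) := by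
        rw [eLpNorm_nnreal_pow_eq_lintegral hp, eLpNorm_nnreal_pow_eq_lintegral hq]
        exact lintegral_enorm_rpow_le hf q.2 (NNReal.coe_le_coe.2 hqp)
    _ ≤ (A * eLpNorm f q μ) ^ (p - q : ℝ) * (A * eLpNorm f q μ) ^ (q : ℝ) := by
        gcongr
        exact le_mul_of_one_le_left' hA
    _ = (A * eLpNorm f q μ) ^ (p : ℝ) := by
        rw [← ENNReal.rpow_add_of_nonneg _ _ hsub q.coe_nonneg, sub_add_cancel]

lemma eLpNorm_le_eLpNorm_mul_rpow_measure_of_support_subset {f : α → F}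
    (hf : AEStronglyMeasurable f μ) {s : Set α} (hs : f.support ⊆ s) {p q : ℝ≥0∞} (hpq : p ≤ q) :
    eLpNorm f p μ ≤ eLpNorm f q μ * μ s ^ (1 / p.toReal - 1 / q.toReal) := by
  simpa [eLpNorm_restrict_eq_of_support_subset hs] using
    eLpNorm_le_eLpNorm_mul_rpow_measure_univ hpq (hf.restrict (s := s))

end Lebesgue

section Fourier

variable {E F : Type*} [NormedAddCommGroup E] [InnerProductSpace ℝ E] [FiniteDimensional ℝ E]
  [MeasurableSpace E] [BorelSpace E] [NormedAddCommGroup F]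

lemma eLpNorm_top_le_eLpNorm_one_fourier [NormedSpace ℂ F] [CompleteSpace F] (f : 𝓢(E, F)) :
    eLpNorm f ∞ volume ≤ eLpNorm (𝓕 f : 𝓢(E, F)) 1 volume := by
  rw [eLpNorm_exponent_top, eLpNorm_one_eq_lintegral_enorm]
  refine eLpNormEssSup_le_of_ae_enorm_bound (.of_forall fun x ↦ ?_)
  calc ‖f x‖ₑ = ‖∫ ξ, Real.fourierChar (inner ℝ ξ x) • (𝓕 f : 𝓢(E, F)) ξ‖ₑ := by
        rw [← Real.fourierInv_eq, ← SchwartzMap.fourierInv_coe,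
          FourierTransform.fourierInv_fourier_eq]
    _ ≤ ∫⁻ ξ, ‖Real.fourierChar (inner ℝ ξ x) • (𝓕 f : 𝓢(E, F)) ξ‖ₑ :=
        enorm_integral_le_lintegral_enorm _
    _ = ∫⁻ ξ, ‖(𝓕 f : 𝓢(E, F)) ξ‖ₑ := by simp only [← ofReal_norm, Circle.norm_smul]

variable [InnerProductSpace ℂ F] [CompleteSpace F]

lemma eLpNorm_two_fourier (f : 𝓢(E, F)) :
    eLpNorm (𝓕 f : 𝓢(E, F)) 2 volume = eLpNorm f 2 volume := by
  have h := f.norm_fourier_toL2_eq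
  rw [SchwartzMap.norm_toLp, SchwartzMap.norm_toLp] at h
  exact (ENNReal.toReal_eq_toReal_iff' (SchwartzMap.memLp _ 2 volume).eLpNorm_ne_top
    (f.memLp 2 volume).eLpNorm_ne_top).1 h

theorem eLpNorm_top_le_of_fourier_eq_zero_off {s : Set E} (f : 𝓢(E, F))
    (hf : ∀ ξ ∉ s, 𝓕 (⇑f) ξ = 0) :
    eLpNorm f ∞ volume ≤ volume s ^ (1 / 2 : ℝ) * eLpNorm f 2 volume := by
  have hsupp : Function.support (𝓕 f : 𝓢(E, F)) ⊆ s :=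
    Function.support_subset_iff'.2 fun ξ hξ ↦ by rw [SchwartzMap.fourier_coe, hf ξ hξ]
  calc eLpNorm f ∞ volume ≤ eLpNorm (𝓕 f : 𝓢(E, F)) 1 volume :=
        eLpNorm_top_le_eLpNorm_one_fourier f
    _ ≤ eLpNorm (𝓕 f : 𝓢(E, F)) 2 volume *
          volume s ^ (1 / (1 : ℝ≥0∞).toReal - 1 / (2 : ℝ≥0∞).toReal) :=
        eLpNorm_le_eLpNorm_mul_rpow_measure_of_support_subset
          (𝓕 f : 𝓢(E, F)).continuous.aestronglyMeasurable hsupp one_le_two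
    _ = volume s ^ (1 / 2 : ℝ) * eLpNorm f 2 volume := by
        rw [eLpNorm_two_fourier, mul_comm]
        norm_num

end Fourier


section Cutoff

variable {E : Type*} [NormedAddCommGroup E] [NormedSpace ℝ E] [FiniteDimensional ℝ E]

/-- The smooth cutoff function `χ(c x)`, where `χ` is a bump function equal to `1` on the unit
ball; it is used with `c → 0` to remove assumptions of compact support. -/
def dilatedBump (c : ℝ) (x : E) : ℝ :=
  (⟨1, 2, one_pos, one_lt_two⟩ : ContDiffBump (0 : E)) (c • x)

lemma contDiff_dilatedBump (c : ℝ) : ContDiff ℝ 1 (dilatedBump c : E → ℝ) :=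
  (ContDiffBump.contDiff _).comp (contDiff_const_smul c)

lemma hasCompactSupport_dilatedBump {c : ℝ} (hc : c ≠ 0) :
    HasCompactSupport (dilatedBump c : E → ℝ) :=
  (ContDiffBump.hasCompactSupport _).comp_smul hc

lemma enorm_dilatedBump_le_one (c : ℝ) (x : E) : ‖dilatedBump c x‖ₑ ≤ 1 := by
  rw [dilatedBump, Real.enorm_of_nonneg (ContDiffBump.nonneg _)]
  exact ENNReal.ofReal_le_one.2 (ContDiffBump.le_one _)

lemma tendsto_dilatedBump (x : E) : Tendsto (fun c ↦ dilatedBump c x) (𝓝 0) (𝓝 1) := by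
  have hcont : Continuous fun c : ℝ ↦ dilatedBump c x :=
    (ContDiffBump.continuous _).comp (continuous_id.smul continuous_const)
  have hone : dilatedBump 0 x = 1 := ContDiffBump.one_of_mem_closedBall _ (by simp)
  simpa [hone] using hcont.tendsto 0

/-- The supremum of `|x| |∇χ(x)|` is invariant under dilation of `χ`, so `K` does not depend on
`c`. -/
lemma exists_enorm_mul_enorm_fderiv_dilatedBump_le :
    ∃ K : ℝ≥0, ∀ (c : ℝ) (x : E), ‖x‖ₑ * ‖fderiv ℝ (dilatedBump c) x‖ₑ ≤ K := by
  let χ : ContDiffBump (0 : E) := ⟨1, 2, one_pos, one_lt_two⟩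
  have hcont : Continuous fun y ↦ ‖y‖ • fderiv ℝ χ y :=
    continuous_norm.smul ((χ.contDiff (n := 1)).continuous_fderiv one_ne_zero)
  obtain ⟨K, hK⟩ := hcont.bounded_above_of_compact_support
    ((χ.hasCompactSupport.fderiv ℝ).smul_left (f := fun y ↦ ‖y‖))
  refine ⟨K.toNNReal, fun c x ↦ ?_⟩
  have hderiv : fderiv ℝ (dilatedBump c) x = c • fderiv ℝ χ (c • x) := fderiv_comp_smul ..
  calc ‖x‖ₑ * ‖fderiv ℝ (dilatedBump c) x‖ₑ = ‖‖c • x‖ • fderiv ℝ χ (c • x)‖ₑ := by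
        rw [hderiv, enorm_smul, enorm_smul, enorm_norm, enorm_smul]
        ring
    _ ≤ K.toNNReal := by
        rw [← ofReal_norm]
        exact ENNReal.ofReal_le_ofReal (hK _)

end Cutoff

section Sobolev

variable {E F : Type*} [NormedAddCommGroup E] [NormedSpace ℝ E] [NormedAddCommGroup F]
  [NormedSpace ℝ F]

lemma enorm_fderiv_smul_le {χ : E → ℝ} {u : E → F} {x : E} (hχ : DifferentiableAt ℝ χ x)
    (hu : DifferentiableAt ℝ u x) :
    ‖fderiv ℝ (fun y ↦ χ y • u y) x‖ₑ ≤ ‖χ x‖ₑ * ‖fderiv ℝ u x‖ₑ + ‖fderiv ℝ χ x‖ₑ * ‖u x‖ₑ := by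
  rw [fderiv_fun_smul hχ hu]
  refine (enorm_add_le (χ x • fderiv ℝ u x) _).trans_eq ?_
  rw [enorm_smul, ← ofReal_norm (ContinuousLinearMap.smulRight _ _),
    ContinuousLinearMap.norm_smulRight_apply, ENNReal.ofReal_mul (norm_nonneg _), ofReal_norm,
    ofReal_norm]

variable [FiniteDimensional ℝ E]

lemma exists_enorm_fderiv_dilatedBump_smul_le :
    ∃ K : ℝ≥0, ∀ {u : E → F} {g : E → ℝ≥0∞}, ContDiff ℝ 1 u → (∀ x, ‖u x‖ₑ ≤ ‖x‖ₑ * g x) →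
      ∀ (c : ℝ) (x : E),
        ‖fderiv ℝ (fun y ↦ dilatedBump c y • u y) x‖ₑ ≤ ‖fderiv ℝ u x‖ₑ + K * g x := by
  obtain ⟨K, hK⟩ := exists_enorm_mul_enorm_fderiv_dilatedBump_le (E := E)
  refine ⟨K, fun {u g} hu hug c x ↦ ?_⟩
  calc ‖fderiv ℝ (fun y ↦ dilatedBump c y • u y) x‖ₑ
      ≤ ‖dilatedBump c x‖ₑ * ‖fderiv ℝ u x‖ₑ + ‖fderiv ℝ (dilatedBump c) x‖ₑ * ‖u x‖ₑ :=
        enorm_fderiv_smul_le ((contDiff_dilatedBump c).differentiable one_ne_zero x)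
          (hu.differentiable one_ne_zero x)
    _ ≤ 1 * ‖fderiv ℝ u x‖ₑ + ‖fderiv ℝ (dilatedBump c) x‖ₑ * (‖x‖ₑ * g x) := by
        gcongr
        exacts [enorm_dilatedBump_le_one c x, hug x]
    _ = ‖fderiv ℝ u x‖ₑ + (‖x‖ₑ * ‖fderiv ℝ (dilatedBump c) x‖ₑ) * g x := by ring
    _ ≤ ‖fderiv ℝ u x‖ₑ + K * g x := by grw [hK c x]

variable [MeasurableSpace E] [BorelSpace E] (μ : Measure E)

lemma eLpNorm_le_of_forall_eLpNorm_dilatedBump_smul_le {u : E → F} (hu : Continuous u) {p B : ℝ≥0∞}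
    (h : ∀ c ≠ 0, eLpNorm (fun y ↦ dilatedBump c y • u y) p μ ≤ B) : eLpNorm u p μ ≤ B := by
  let c (k : ℕ) : ℝ := 1 / (k + 1)
  have hlim (x : E) : Tendsto (fun k ↦ dilatedBump (c k) x • u x) atTop (𝓝 (u x)) := by
    simpa [c] using
      ((tendsto_dilatedBump x).comp tendsto_one_div_add_atTop_nhds_zero_nat).smul_const (u x)
  calc eLpNorm u p μ ≤ liminf (fun k ↦ eLpNorm (fun x ↦ dilatedBump (c k) x • u x) p μ) atTop :=
        Lp.eLpNorm_lim_le_liminf_eLpNorm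
          (fun k ↦ ((contDiff_dilatedBump (E := E) (c k)).continuous.smul
            hu).aestronglyMeasurable) u (.of_forall hlim)
    _ ≤ B := liminf_le_of_frequently_le'
          (.of_forall fun k ↦ h (c k) (Nat.one_div_pos_of_nat).ne')

variable [μ.IsAddHaarMeasure]

/-- Gagliardo–Nirenberg–Sobolev without compact support: multiply `u` by cutoffs `χ(c x)` and let
`c → 0`. As `|x| |∇χ(c x)|` is bounded uniformly in `c`, the derivative of the cutoff costs only
`∫ g`. -/
theorem exists_eLpNorm_le_lintegral_enorm_fderiv_add {p : ℝ≥0}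
    (hp : NNReal.HolderConjugate (finrank ℝ E) p) :
    ∃ C : ℝ≥0, ∀ {u : E → F} {g : E → ℝ≥0∞}, ContDiff ℝ 1 u → (∀ x, ‖u x‖ₑ ≤ ‖x‖ₑ * g x) →
      eLpNorm u p μ ≤ C * (∫⁻ x, ‖fderiv ℝ u x‖ₑ ∂μ + ∫⁻ x, g x ∂μ) := by
  obtain ⟨K, hK⟩ := exists_enorm_fderiv_dilatedBump_smul_le (E := E) (F := F)
  let S := eLpNormLESNormFDerivOneConst μ p
  refine ⟨S * max 1 K, fun {u g} hu hug ↦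
    eLpNorm_le_of_forall_eLpNorm_dilatedBump_smul_le μ hu.continuous fun c hc ↦ ?_⟩
  calc eLpNorm (fun y ↦ dilatedBump c y • u y) p μ
      ≤ S * ∫⁻ x, ‖fderiv ℝ (fun y ↦ dilatedBump c y • u y) x‖ₑ ∂μ := by
        rw [← eLpNorm_one_eq_lintegral_enorm]
        exact eLpNorm_le_eLpNorm_fderiv_one μ ((contDiff_dilatedBump c).smul hu)
          ((hasCompactSupport_dilatedBump hc).smul_right (f' := u)) hp
    _ ≤ S * ∫⁻ x, (‖fderiv ℝ u x‖ₑ + K * g x) ∂μ := by grw [lintegral_mono (hK hu hug c)]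
    _ = S * (1 * ∫⁻ x, ‖fderiv ℝ u x‖ₑ ∂μ + K * ∫⁻ x, g x ∂μ) := by
        rw [lintegral_add_left (hu.continuous_fderiv one_ne_zero).enorm.measurable,
          lintegral_const_mul' _ _ ENNReal.coe_ne_top, one_mul]
    _ ≤ (S * max 1 K : ℝ≥0) * (∫⁻ x, ‖fderiv ℝ u x‖ₑ ∂μ + ∫⁻ x, g x ∂μ) := by
        rw [ENNReal.coe_mul, mul_assoc, mul_add ((max 1 K : ℝ≥0) : ℝ≥0∞)]
        gcongr <;> simp

end Sobolev

section Weight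

variable {E F : Type*} [NormedAddCommGroup E] [NormedAddCommGroup F]

/-- A smooth substitute for the weight `|x|`: it is `1`-Lipschitz and satisfies
`|x| - 1 ≤ softNorm x ≤ |x|`. -/
def softNorm (x : E) : ℝ :=
  √(1 + ‖x‖ ^ 2) - 1

lemma enorm_le_one_add_enorm_softNorm (x : E) : ‖x‖ₑ ≤ 1 + ‖softNorm x‖ₑ := by
  have hnorm : ‖x‖ ≤ ‖1 + softNorm x‖ := by
    rw [softNorm, add_sub_cancel, Real.norm_of_nonneg (Real.sqrt_nonneg _)]
    exact Real.le_sqrt_of_sq_le (by linarith)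
  simpa using (enorm_le_iff_norm_le.2 hnorm).trans (enorm_add_le _ _)

lemma enorm_softNorm_le (x : E) : ‖softNorm x‖ₑ ≤ ‖x‖ₑ := by
  have hlower : 1 ≤ √(1 + ‖x‖ ^ 2) := Real.one_le_sqrt.2 (by simp)
  have hupper : √(1 + ‖x‖ ^ 2) ≤ 1 + ‖x‖ :=
    Real.sqrt_le_iff.2 ⟨by positivity, by nlinarith [norm_nonneg x]⟩
  rw [softNorm, enorm_le_iff_norm_le, Real.norm_of_nonneg (sub_nonneg.2 hlower)]
  linarith

lemma one_add_enorm_mul_enorm_pow_three_le (f : E → F) (x : E) :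
    (1 + ‖x‖ₑ) * ‖f x‖ₑ ^ 3 ≤ 2 * ‖f x‖ₑ ^ 3 + ‖softNorm x * ‖f x‖ ^ 2‖ₑ * ‖f x‖ₑ :=
  calc (1 + ‖x‖ₑ) * ‖f x‖ₑ ^ 3 ≤ (1 + (1 + ‖softNorm x‖ₑ)) * ‖f x‖ₑ ^ 3 := by
        grw [enorm_le_one_add_enorm_softNorm x]
    _ = 2 * ‖f x‖ₑ ^ 3 + ‖softNorm x * ‖f x‖ ^ 2‖ₑ * ‖f x‖ₑ := by
        simp only [enorm_mul, enorm_pow, enorm_norm]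
        ring

variable [InnerProductSpace ℝ F]

lemma norm_fderiv_norm_sq_le [NormedSpace ℝ E] {f : E → F} {x : E}
    (hf : DifferentiableAt ℝ f x) :
    ‖fderiv ℝ (fun y ↦ ‖f y‖ ^ 2) x‖ ≤ 2 * (‖f x‖ * ‖fderiv ℝ f x‖) := by
  rw [hf.hasFDerivAt.norm_sq.fderiv, ← Nat.cast_smul_eq_nsmul ℝ, norm_smul]
  simpa [innerSL_apply_norm] using (innerSL ℝ (f x)).opNorm_comp_le (fderiv ℝ f x)

variable [InnerProductSpace ℝ E]

lemma contDiff_softNorm : ContDiff ℝ 1 (softNorm : E → ℝ) :=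
  ((contDiff_const.add (contDiff_norm_sq ℝ)).sqrt fun x ↦ by positivity).sub contDiff_const

lemma norm_fderiv_softNorm_le_one (x : E) : ‖fderiv ℝ (softNorm : E → ℝ) x‖ ≤ 1 := by
  have hpos : 0 < 1 + ‖x‖ ^ 2 := by positivity
  have hsq : HasFDerivAt (fun x : E ↦ 1 + ‖x‖ ^ 2) ((2 : ℝ) • innerSL ℝ x) x := by
    simpa [ofNat_smul_eq_nsmul] using (hasStrictFDerivAt_norm_sq x).hasFDerivAt.const_add 1
  have hderiv : fderiv ℝ softNorm x = (1 / √(1 + ‖x‖ ^ 2)) • innerSL ℝ x := by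
    refine ((hsq.sqrt hpos.ne').sub_const 1).fderiv.trans ?_
    rw [smul_smul]
    congr 1
    field_simp
  rw [hderiv, norm_smul, innerSL_apply_norm, Real.norm_of_nonneg (by positivity),
    one_div_mul_eq_div, div_le_one (Real.sqrt_pos.2 hpos)]
  exact Real.le_sqrt_of_sq_le (by linarith)

lemma enorm_fderiv_softNorm_mul_norm_sq_le {f : E → F} {x : E} (hf : DifferentiableAt ℝ f x) :
    ‖fderiv ℝ (fun y ↦ softNorm y * ‖f y‖ ^ 2) x‖ₑ ≤
      ‖f x‖ₑ ^ 2 + 2 * (‖f x‖ₑ * ‖‖x‖ * ‖fderiv ℝ f x‖‖ₑ) := by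
  have hnorm_sq : ‖fderiv ℝ (fun y ↦ ‖f y‖ ^ 2) x‖ₑ ≤ 2 * (‖f x‖ₑ * ‖fderiv ℝ f x‖ₑ) := by
    simpa [← ofReal_norm, ENNReal.ofReal_mul] using
      ENNReal.ofReal_le_ofReal (norm_fderiv_norm_sq_le hf)
  calc ‖fderiv ℝ (fun y ↦ softNorm y * ‖f y‖ ^ 2) x‖ₑ
      ≤ ‖softNorm x‖ₑ * ‖fderiv ℝ (fun y ↦ ‖f y‖ ^ 2) x‖ₑ +
          ‖fderiv ℝ softNorm x‖ₑ * ‖‖f x‖ ^ 2‖ₑ :=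
        enorm_fderiv_smul_le (contDiff_softNorm.differentiable one_ne_zero x) (hf.norm_sq ℝ)
    _ ≤ ‖x‖ₑ * (2 * (‖f x‖ₑ * ‖fderiv ℝ f x‖ₑ)) + 1 * ‖‖f x‖ ^ 2‖ₑ := by
        gcongr
        · exact enorm_softNorm_le x
        · simpa [← ofReal_norm] using norm_fderiv_softNorm_le_one x
    _ = ‖f x‖ₑ ^ 2 + 2 * (‖f x‖ₑ * ‖‖x‖ * ‖fderiv ℝ f x‖‖ₑ) := by
        simp only [enorm_mul, enorm_pow, enorm_norm]
        ring

variable [FiniteDimensional ℝ E] [MeasurableSpace E] [BorelSpace E] (μ : Measure E)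

lemma lintegral_enorm_fderiv_softNorm_mul_norm_sq_le {f : E → F} (hf : ContDiff ℝ 1 f) :
    ∫⁻ x, ‖fderiv ℝ (fun y ↦ softNorm y * ‖f y‖ ^ 2) x‖ₑ ∂μ ≤
      eLpNorm f 2 μ ^ 2 +
        2 * (eLpNorm f 2 μ * eLpNorm (fun x ↦ ‖x‖ * ‖fderiv ℝ f x‖) 2 μ) := by
  have hcont : Continuous fun x ↦ ‖x‖ * ‖fderiv ℝ f x‖ :=
    continuous_norm.mul (hf.continuous_fderiv one_ne_zero).norm
  calc ∫⁻ x, ‖fderiv ℝ (fun y ↦ softNorm y * ‖f y‖ ^ 2) x‖ₑ ∂μ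
      ≤ ∫⁻ x, (‖f x‖ₑ ^ 2 + 2 * (‖f x‖ₑ * ‖‖x‖ * ‖fderiv ℝ f x‖‖ₑ)) ∂μ :=
        lintegral_mono fun x ↦
          enorm_fderiv_softNorm_mul_norm_sq_le (hf.differentiable one_ne_zero x)
    _ = ∫⁻ x, ‖f x‖ₑ ^ 2 ∂μ + 2 * ∫⁻ x, ‖f x‖ₑ * ‖‖x‖ * ‖fderiv ℝ f x‖‖ₑ ∂μ := by
        rw [lintegral_add_left (hf.continuous.enorm.measurable.pow_const 2),
          lintegral_const_mul' _ _ ENNReal.ofNat_ne_top]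
    _ ≤ _ := by
        rw [lintegral_enorm_pow_eq f two_ne_zero, Nat.cast_ofNat]
        gcongr
        exact lintegral_enorm_mul_enorm_le hf.continuous.aestronglyMeasurable
          hcont.aestronglyMeasurable 2 2

variable [μ.IsAddHaarMeasure]

theorem exists_eLpNorm_softNorm_mul_norm_sq_le {p : ℝ≥0}
    (hp : NNReal.HolderConjugate (finrank ℝ E) p) :
    ∃ C : ℝ≥0, ∀ {f : E → F}, ContDiff ℝ 1 f →
      eLpNorm (fun x ↦ softNorm x * ‖f x‖ ^ 2) p μ ≤
        C * (eLpNorm f 2 μ ^ 2 +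
          eLpNorm f 2 μ * eLpNorm (fun x ↦ ‖x‖ * ‖fderiv ℝ f x‖) 2 μ) := by
  obtain ⟨C, hC⟩ := exists_eLpNorm_le_lintegral_enorm_fderiv_add (F := ℝ) μ hp
  refine ⟨C * 2, fun {f} hf ↦ ?_⟩
  set N := eLpNorm f 2 μ
  set D := eLpNorm (fun x ↦ ‖x‖ * ‖fderiv ℝ f x‖) 2 μ
  have hbound (x : E) : ‖softNorm x * ‖f x‖ ^ 2‖ₑ ≤ ‖x‖ₑ * ‖f x‖ₑ ^ 2 := by
    simp only [enorm_mul, enorm_pow, enorm_norm]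
    gcongr
    exact enorm_softNorm_le x
  calc eLpNorm (fun x ↦ softNorm x * ‖f x‖ ^ 2) p μ
      ≤ C * (∫⁻ x, ‖fderiv ℝ (fun y ↦ softNorm y * ‖f y‖ ^ 2) x‖ₑ ∂μ + ∫⁻ x, ‖f x‖ₑ ^ 2 ∂μ) :=
        hC (contDiff_softNorm.mul (hf.norm_sq ℝ)) hbound
    _ ≤ C * ((N ^ 2 + 2 * (N * D)) + N ^ 2) := by
        grw [lintegral_enorm_fderiv_softNorm_mul_norm_sq_le μ hf,
          lintegral_enorm_pow_eq f two_ne_zero, Nat.cast_ofNat]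
    _ = (C * 2 : ℝ≥0) * (N ^ 2 + N * D) := by
        push_cast
        ring

end Weight

section CubicEstimate

variable {E F : Type*} [NormedAddCommGroup E] [InnerProductSpace ℝ E] [MeasurableSpace E]
  [BorelSpace E] [NormedAddCommGroup F]

lemma lintegral_one_add_enorm_mul_enorm_pow_three_le {μ : Measure E} {f : E → F}
    (hf : AEStronglyMeasurable f μ) (p q : ℝ≥0∞) [p.HolderConjugate q] :
    ∫⁻ x, (1 + ‖x‖ₑ) * ‖f x‖ₑ ^ 3 ∂μ ≤
      2 * eLpNorm f 3 μ ^ 3 + eLpNorm (fun x ↦ softNorm x * ‖f x‖ ^ 2) p μ * eLpNorm f q μ :=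
  calc ∫⁻ x, (1 + ‖x‖ₑ) * ‖f x‖ₑ ^ 3 ∂μ
      ≤ ∫⁻ x, (2 * ‖f x‖ₑ ^ 3 + ‖softNorm x * ‖f x‖ ^ 2‖ₑ * ‖f x‖ₑ) ∂μ :=
        lintegral_mono (one_add_enorm_mul_enorm_pow_three_le f)
    _ = 2 * eLpNorm f 3 μ ^ 3 + ∫⁻ x, ‖softNorm x * ‖f x‖ ^ 2‖ₑ * ‖f x‖ₑ ∂μ := by
        rw [lintegral_add_left' ((hf.enorm.pow_const 3).const_mul 2),
          lintegral_const_mul' _ _ ENNReal.ofNat_ne_top, lintegral_enorm_pow_eq f three_ne_zero,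
          Nat.cast_ofNat]
    _ ≤ _ := by
        gcongr
        exact lintegral_enorm_mul_enorm_le
          (contDiff_softNorm.continuous.aestronglyMeasurable.mul (hf.norm.pow 2)) hf p q

variable [FiniteDimensional ℝ E]

theorem exists_lintegral_one_add_enorm_mul_enorm_pow_three_le [InnerProductSpace ℝ F]
    (hE : 1 < finrank ℝ E) (μ : Measure E) [μ.IsAddHaarMeasure] {A : ℝ≥0} (hA : 1 ≤ A) :
    ∃ C : ℝ≥0, ∀ {f : E → F}, ContDiff ℝ 1 f → eLpNorm f ∞ μ ≤ A * eLpNorm f 2 μ →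
      ∫⁻ x, (1 + ‖x‖ₑ) * ‖f x‖ₑ ^ 3 ∂μ ≤
        C * (eLpNorm f 2 μ ^ 3 +
          eLpNorm f 2 μ ^ 2 * eLpNorm (fun x ↦ ‖x‖ * ‖fderiv ℝ f x‖) 2 μ) := by
  let n : ℝ≥0 := finrank ℝ E
  have hn : NNReal.HolderConjugate n n.conjExponent := .conjExponent (Nat.one_lt_cast.2 hE)
  have : ENNReal.HolderConjugate n.conjExponent n := hn.symm.coe_ennreal
  obtain ⟨S, hS⟩ := exists_eLpNorm_softNorm_mul_norm_sq_le (F := F) μ hn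
  refine ⟨2 * A ^ 3 + S * A, fun {f} hf hfA ↦ ?_⟩
  set N := eLpNorm f 2 μ
  set D := eLpNorm (fun x ↦ ‖x‖ * ‖fderiv ℝ f x‖) 2 μ
  have hmeas : AEStronglyMeasurable f μ := hf.continuous.aestronglyMeasurable
  have hLp {p : ℝ≥0} (hp : 2 ≤ p) : eLpNorm f p μ ≤ A * N :=
    eLpNorm_le_mul_eLpNorm_of_eLpNorm_top_le hmeas two_ne_zero hp (ENNReal.one_le_coe_iff.2 hA) hfA
  have hL3 : eLpNorm f 3 μ ≤ A * N := hLp (p := 3) (by norm_num)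
  calc ∫⁻ x, (1 + ‖x‖ₑ) * ‖f x‖ₑ ^ 3 ∂μ
      ≤ 2 * eLpNorm f 3 μ ^ 3 +
          eLpNorm (fun x ↦ softNorm x * ‖f x‖ ^ 2) n.conjExponent μ * eLpNorm f n μ :=
        lintegral_one_add_enorm_mul_enorm_pow_three_le hmeas _ _
    _ ≤ 2 * (A * N) ^ 3 + S * (N ^ 2 + N * D) * (A * N) := by
        grw [hL3, hS hf, hLp (p := n) (Nat.ofNat_le_cast.2 hE)]
    _ = 2 * A ^ 3 * N ^ 3 + S * A * (N ^ 3 + N ^ 2 * D) := by ring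
    _ ≤ 2 * A ^ 3 * (N ^ 3 + N ^ 2 * D) + S * A * (N ^ 3 + N ^ 2 * D) := by
        gcongr
        exact le_self_add
    _ = (2 * A ^ 3 + S * A : ℝ≥0) * (N ^ 3 + N ^ 2 * D) := by
        push_cast
        ring

theorem weighted_cubic_estimate_low_general [InnerProductSpace ℂ F] [CompleteSpace F]
    (hE : 1 < finrank ℝ E) {s : Set E} (hs : volume s ≠ ∞) :
    ∃ C : ℝ, 0 < C ∧ ∀ f : 𝓢(E, F), (∀ ξ ∉ s, 𝓕 (⇑f) ξ = 0) →
      ∫⁻ x, ENNReal.ofReal ((1 + ‖x‖) * ‖f x‖ ^ 3) ≤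
        ENNReal.ofReal C *
          (eLpNorm f 2 volume ^ 3 +
            eLpNorm f 2 volume ^ 2 * eLpNorm (fun x ↦ ‖x‖ * ‖fderiv ℝ f x‖) 2 volume) := by
  let _ : InnerProductSpace ℝ F := InnerProductSpace.complexToReal
  have hs' : volume s ^ (1 / 2 : ℝ) ≠ ∞ := ENNReal.rpow_ne_top_of_nonneg (by norm_num) hs
  let A : ℝ≥0 := max 1 (volume s ^ (1 / 2 : ℝ)).toNNReal
  obtain ⟨C, hC⟩ := exists_lintegral_one_add_enorm_mul_enorm_pow_three_le (F := F) hE volume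
    (A := A) (le_max_left _ _)
  refine ⟨C + 1, by positivity, fun f hf ↦ ?_⟩
  have hbernstein : eLpNorm f ∞ volume ≤ A * eLpNorm f 2 volume := by
    refine (eLpNorm_top_le_of_fourier_eq_zero_off f hf).trans ?_
    gcongr
    exact (ENNReal.coe_toNNReal hs').symm.trans_le (ENNReal.coe_le_coe.2 (le_max_right _ _))
  calc ∫⁻ x, ENNReal.ofReal ((1 + ‖x‖) * ‖f x‖ ^ 3) = ∫⁻ x, (1 + ‖x‖ₑ) * ‖f x‖ₑ ^ 3 := by
        refine lintegral_congr fun x ↦ ?_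
        rw [ENNReal.ofReal_mul (by positivity), ENNReal.ofReal_add one_pos.le (norm_nonneg _),
          ENNReal.ofReal_pow (norm_nonneg _), ENNReal.ofReal_one, ofReal_norm, ofReal_norm]
    _ ≤ C * _ := hC (f.smooth 1) hbernstein
    _ ≤ _ := by
        gcongr
        rw [← ENNReal.ofReal_coe_nnreal]
        exact ENNReal.ofReal_le_ofReal (by simp)

end CubicEstimate

/-- Weighted cubic estimate for band-limited Schwartz functions:
`∫ (1+|x|)|f|³ ≤ C (‖f‖₂³ + ‖f‖₂² ‖|x|∇f‖₂)`. -/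
theorem weighted_cubic_estimate_low (r : ℝ) (hr : 0 < r) :
    ∃ C : ℝ, 0 < C ∧ ∀ f : 𝓢(E³, ℂ),
      (∀ ξ : E³, r < ‖ξ‖ → 𝓕 (⇑f) ξ = 0) →
      ∫⁻ x : E³, ENNReal.ofReal ((1 + ‖x‖) * ‖f x‖ ^ 3) ≤
        ENNReal.ofReal C *
          ((eLpNorm (⇑f) 2 (volume : Measure E³)) ^ 3 +
            (eLpNorm (⇑f) 2 (volume : Measure E³)) ^ 2 *
              eLpNorm (fun x : E³ => ‖x‖ * ‖fderiv ℝ (⇑f) x‖) 2 (volume : Measure E³)) := by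
  simpa using weighted_cubic_estimate_low_general (E := E³) (F := ℂ) (by simp)
    (s := Metric.closedBall 0 r) measure_closedBall_lt_top.ne
end
end

section
/- There exists a constant C > 0 such that for every twice continuously differentiable, compactly supported function u : ℝ³ → ℂ, writing M = ‖u‖_{L²} + ‖∇u‖_{L²} + ‖∇²u‖_{L²}, the function N(x) = |u(x)|²u(x) satisfies ‖(1+|x|)N‖_{L²} + ‖(1+|x|)∇N‖_{L²} ≤ C (M³ + M²(‖|x|u‖_{L²} + ‖|x|∇u‖_{L²})). -/
open MeasureTheory
open scoped ENNReal NNReal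

noncomputable section

local notation "E³" => EuclideanSpace ℝ (Fin 3)

/-!
The cubic nonlinearity satisfies the pointwise bounds `|N| ≤ |u|³` and `|∇N| ≤ 3 |u|² |∇u|`, so
once `‖u‖_∞ ≤ A M` is known, both weighted norms are at most `3 (A M)²` times weighted norms
of `u` and `∇u`. For the sup bound, average
`|u(x)| ≤ |u(x + y)| + ∫₀¹ |∇u(x + t y)| dt` over the unit ball. By Hölder's inequality and
scaling, the averaged gradient term is controlled by `‖∇u‖_p ∫₀¹ t ^ (-n/p) dt`, which is finite
for `p > n`; in dimension `3`, take `p = 6` and bound `‖∇u‖₆` by `‖∇²u‖₂` with the Sobolev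
inequality.
-/

section Averaging

theorem setLIntegral_enorm_le_eLpNorm_mul_rpow_measure {α F : Type*} [MeasurableSpace α]
    {μ : Measure α} [NormedAddCommGroup F] {f : α → F} (hf : AEStronglyMeasurable f μ)
    {p : ℝ≥0∞} (hp : 1 ≤ p) (s : Set α) :
    ∫⁻ x in s, ‖f x‖ₑ ∂μ ≤ eLpNorm f p μ * μ s ^ (1 - 1 / p.toReal) := by
  have hölder := eLpNorm_le_eLpNorm_mul_rpow_measure_univ hp (hf.restrict (s := s))
  rw [eLpNorm_one_eq_lintegral_enorm, Measure.restrict_apply_univ, ENNReal.toReal_one,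
    div_one] at hölder
  exact hölder.trans (mul_le_mul_left (eLpNorm_restrict_le f p μ s) _)

variable {E F : Type*} [NormedAddCommGroup E] [NormedSpace ℝ E]
  [NormedAddCommGroup F]

theorem enorm_le_enorm_add_lintegral_enorm_fderiv [NormedSpace ℝ F] {u : E → F}
    (hu : ContDiff ℝ 1 u) (x y : E) :
    ‖u x‖ₑ ≤ ‖u (x + y)‖ₑ + ‖y‖ₑ * ∫⁻ t in Set.Ioo (0 : ℝ) 1, ‖fderiv ℝ u (x + t • y)‖ₑ := by
  have hderiv (t : ℝ) : deriv (fun t : ℝ => u (x + t • y)) t = fderiv ℝ u (x + t • y) y := by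
    have hline : HasDerivAt (fun t : ℝ => x + t • y) y t := by
      simpa using ((hasDerivAt_id t).smul_const y).const_add x
    exact ((hu.differentiable one_ne_zero _).hasFDerivAt.comp_hasDerivAt t hline).deriv
  have hincrement :
      ‖u (x + y) - u x‖ₑ ≤ ‖y‖ₑ * ∫⁻ t in Set.Ioo (0 : ℝ) 1, ‖fderiv ℝ u (x + t • y)‖ₑ :=
    calc ‖u (x + y) - u x‖ₑ
        ≤ ∫⁻ t in Set.Icc (0 : ℝ) 1, ‖deriv (fun t : ℝ => u (x + t • y)) t‖ₑ := by
          simpa only [one_smul, zero_smul, add_zero] using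
            enorm_sub_le_lintegral_deriv_of_contDiffOn_Icc (f := fun t : ℝ => u (x + t • y))
              (hu.comp (by fun_prop)).contDiffOn zero_le_one
      _ ≤ ∫⁻ t in Set.Ioo (0 : ℝ) 1, ‖y‖ₑ * ‖fderiv ℝ u (x + t • y)‖ₑ := by
          rw [← restrict_Ioo_eq_restrict_Icc]
          refine lintegral_mono fun t => ?_
          rw [hderiv, mul_comm]
          exact ContinuousLinearMap.le_opENorm _ _
      _ = _ := lintegral_const_mul' _ _ enorm_ne_top
  calc ‖u x‖ₑ = ‖u (x + y) - (u (x + y) - u x)‖ₑ := by rw [sub_sub_cancel]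
    _ ≤ ‖u (x + y)‖ₑ + ‖u (x + y) - u x‖ₑ := enorm_sub_le
    _ ≤ _ := by gcongr

variable [MeasurableSpace E] [BorelSpace E] [FiniteDimensional ℝ E]
  (μ : Measure E) [μ.IsAddHaarMeasure]

theorem eLpNorm_comp_add_smul {g : E → F} (hg : AEStronglyMeasurable g μ) (p : ℝ≥0∞) (x : E)
    {t : ℝ} (ht : 0 < t) :
    eLpNorm (fun y => g (x + t • y)) p μ =
      ENNReal.ofReal (t ^ (-(Module.finrank ℝ E / p.toReal))) * eLpNorm g p μ := by
  set n := Module.finrank ℝ E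
  have htranslate := measurePreserving_add_left μ x
  have hpos : 0 < (t ^ n)⁻¹ := by positivity
  have hmap : μ.map (t • ·) = ENNReal.ofReal (t ^ n)⁻¹ • μ := by
    rw [Measure.map_addHaar_smul μ ht.ne', abs_of_pos hpos]
  have hgx : AEStronglyMeasurable (fun z => g (x + z)) (μ.map (t • ·)) :=
    hmap ▸ (hg.comp_measurePreserving htranslate).smul_measure _
  have hexp : ((t ^ n)⁻¹) ^ (1 / p).toReal = t ^ (-(n / p.toReal)) := by
    rw [← Real.rpow_natCast, ← Real.rpow_neg ht.le, ← Real.rpow_mul ht.le, one_div,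
      ENNReal.toReal_inv, neg_mul, div_eq_mul_inv]
  calc eLpNorm (fun y => g (x + t • y)) p μ
      = eLpNorm (fun z => g (x + z)) p (μ.map (t • ·)) :=
        (eLpNorm_map_measure hgx (by fun_prop)).symm
    _ = ENNReal.ofReal (t ^ (-(n / p.toReal))) * eLpNorm (fun z => g (x + z)) p μ := by
        rw [hmap, eLpNorm_smul_measure_of_ne_zero (ENNReal.ofReal_pos.2 hpos).ne',
          ENNReal.ofReal_rpow_of_pos hpos, hexp, smul_eq_mul]
    _ = ENNReal.ofReal (t ^ (-(n / p.toReal))) * eLpNorm g p μ :=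
        congrArg (_ * ·) (eLpNorm_comp_measurePreserving hg htranslate)

theorem setLIntegral_lintegral_enorm_segment_le {g : E → F} (hg : Continuous g) {p : ℝ≥0∞}
    (hp : 1 ≤ p) (s : Set E) (x : E) :
    ∫⁻ y in s, (∫⁻ t in Set.Ioo (0 : ℝ) 1, ‖g (x + t • y)‖ₑ) ∂μ ≤
      (∫⁻ t in Set.Ioo (0 : ℝ) 1, ENNReal.ofReal (t ^ (-(Module.finrank ℝ E / p.toReal)))) *
        (eLpNorm g p μ * μ s ^ (1 - 1 / p.toReal)) := by
  have hcont : Continuous (Function.uncurry fun (y : E) (t : ℝ) => ‖g (x + t • y)‖ₑ) :=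
    continuous_enorm.comp (hg.comp (by fun_prop))
  rw [lintegral_lintegral_swap hcont.measurable.aemeasurable,
    ← lintegral_mul_const _ (by fun_prop)]
  refine setLIntegral_mono' measurableSet_Ioo fun t ht => ?_
  have hslice : Continuous fun y => g (x + t • y) := by fun_prop
  rw [← mul_assoc, ← eLpNorm_comp_add_smul μ hg.aestronglyMeasurable p x ht.1]
  exact setLIntegral_enorm_le_eLpNorm_mul_rpow_measure hslice.aestronglyMeasurable hp s

end Averaging

section SupBounds

theorem lintegral_Ioo_rpow_neg_div_ne_top {n : ℕ} {p : ℝ≥0∞} (hp : n < p) :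
    ∫⁻ t in Set.Ioo (0 : ℝ) 1, ENNReal.ofReal (t ^ (-(n / p.toReal))) ≠ ∞ := by
  have hexp : -1 < -(n / p.toReal) := by
    rcases eq_or_ne p ∞ with rfl | hp_top
    · simp
    · have hlt : (n : ℝ) < p.toReal := by
        simpa using (ENNReal.toReal_lt_toReal (ENNReal.natCast_ne_top n) hp_top).2 hp
      rw [neg_lt_neg_iff, div_lt_one (n.cast_nonneg.trans_lt hlt)]
      exact hlt
  exact ((intervalIntegral.integrableOn_Ioo_rpow_iff one_pos).2 hexp).lintegral_lt_top.ne

variable {E : Type*} (F : Type*) [NormedAddCommGroup E] [NormedSpace ℝ E] [MeasurableSpace E]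
  [BorelSpace E] [FiniteDimensional ℝ E] [NormedAddCommGroup F] [NormedSpace ℝ F]
  (μ : Measure E) [μ.IsAddHaarMeasure]

variable {F} in
theorem measure_ball_mul_enorm_le {u : E → F} (hu : ContDiff ℝ 1 u) {p q : ℝ≥0∞} (hp : 1 ≤ p)
    (hq : 1 ≤ q) (x : E) :
    μ (Metric.ball 0 1) * ‖u x‖ₑ ≤
      eLpNorm u q μ * μ (Metric.ball 0 1) ^ (1 - 1 / q.toReal) +
        (∫⁻ t in Set.Ioo (0 : ℝ) 1, ENNReal.ofReal (t ^ (-(Module.finrank ℝ E / p.toReal)))) *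
          (eLpNorm (fderiv ℝ u) p μ * μ (Metric.ball 0 1) ^ (1 - 1 / p.toReal)) := by
  set B := Metric.ball (0 : E) 1
  have hvalue : ∫⁻ y in B, ‖u (x + y)‖ₑ ∂μ ≤ eLpNorm u q μ * μ B ^ (1 - 1 / q.toReal) := by
    have htranslate := measurePreserving_add_left μ x
    have hmeas := hu.continuous.aestronglyMeasurable (μ := μ)
    refine (setLIntegral_enorm_le_eLpNorm_mul_rpow_measure
      (hmeas.comp_measurePreserving htranslate) hq B).trans_eq ?_
    rw [eLpNorm_comp_measurePreserving hmeas htranslate]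
  have hgradient :=
    setLIntegral_lintegral_enorm_segment_le μ (hu.continuous_fderiv one_ne_zero) hp B x
  calc μ B * ‖u x‖ₑ = ∫⁻ _ in B, ‖u x‖ₑ ∂μ := by rw [setLIntegral_const, mul_comm]
    _ ≤ ∫⁻ y in B, (‖u (x + y)‖ₑ +
          ∫⁻ t in Set.Ioo (0 : ℝ) 1, ‖fderiv ℝ u (x + t • y)‖ₑ) ∂μ := by
        refine setLIntegral_mono' measurableSet_ball fun y hy => ?_
        have hy1 : ‖y‖ₑ ≤ 1 := by
          simpa [enorm_le_iff_norm_le] using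
            ENNReal.ofReal_le_one.2 (mem_ball_zero_iff.1 hy).le
        refine (enorm_le_enorm_add_lintegral_enorm_fderiv hu x y).trans ?_
        gcongr
        exact mul_le_of_le_one_left' hy1
    _ = _ := lintegral_add_left
        (continuous_enorm.comp (hu.continuous.comp (continuous_const_add x))).measurable _
    _ ≤ _ := add_le_add hvalue hgradient

theorem exists_enorm_le_mul_eLpNorm_add_eLpNorm_fderiv {p q : ℝ≥0∞} (hp : 1 ≤ p)
    (hfinrank : Module.finrank ℝ E < p) (hq : 1 ≤ q) :
    ∃ A : ℝ≥0, ∀ u : E → F, ContDiff ℝ 1 u → ∀ x,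
      ‖u x‖ₑ ≤ A * (eLpNorm u q μ + eLpNorm (fderiv ℝ u) p μ) := by
  set V := μ (Metric.ball 0 1)
  set I := ∫⁻ t in Set.Ioo (0 : ℝ) 1, ENNReal.ofReal (t ^ (-(Module.finrank ℝ E / p.toReal)))
  have hV : V ≠ 0 := (Metric.measure_ball_pos μ 0 one_pos).ne'
  have hV_top : V ≠ ∞ := measure_ball_lt_top.ne
  have hVpow (r : ℝ) : V ^ r ≠ ∞ := ENNReal.rpow_ne_top_of_ne_zero hV hV_top
  have hI : I ≠ ∞ := lintegral_Ioo_rpow_neg_div_ne_top hfinrank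
  set A : ℝ≥0∞ := V⁻¹ * (V ^ (1 - 1 / q.toReal) + I * V ^ (1 - 1 / p.toReal))
  have hA : A ≠ ∞ := ENNReal.mul_ne_top (ENNReal.inv_ne_top.2 hV)
    (ENNReal.add_ne_top.2 ⟨hVpow _, ENNReal.mul_ne_top hI (hVpow _)⟩)
  refine ⟨A.toNNReal, fun u hu x => ?_⟩
  rw [ENNReal.coe_toNNReal hA]
  set a := eLpNorm u q μ
  set b := eLpNorm (fderiv ℝ u) p μ
  calc ‖u x‖ₑ = V⁻¹ * (V * ‖u x‖ₑ) := by
        rw [← mul_assoc, ENNReal.inv_mul_cancel hV hV_top, one_mul]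
    _ ≤ V⁻¹ * ((a + b) * V ^ (1 - 1 / q.toReal) + I * ((a + b) * V ^ (1 - 1 / p.toReal))) := by
        gcongr
        refine (measure_ball_mul_enorm_le μ hu hp hq x).trans ?_
        gcongr
        · exact le_self_add
        · exact le_add_self
    _ = A * (a + b) := by ring

variable [FiniteDimensional ℝ F]

variable {F} in
theorem eLpNorm_fderiv_le_eLpNorm_iteratedFDeriv_two {u : E → F} (hu : ContDiff ℝ 2 u)
    (hc : HasCompactSupport u) {p p' : ℝ≥0} (hp : 1 ≤ p) (hn : 0 < Module.finrank ℝ E)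
    (hp' : (p' : ℝ)⁻¹ = (p : ℝ)⁻¹ - (Module.finrank ℝ E : ℝ)⁻¹) :
    eLpNorm (fderiv ℝ u) p' μ ≤
      SNormLESNormFDerivOfEqConst (E →L[ℝ] F) μ p * eLpNorm (iteratedFDeriv ℝ 2 u) p μ := by
  have hnorm (x : E) : ‖iteratedFDeriv ℝ 2 u x‖ = ‖fderiv ℝ (fderiv ℝ u) x‖ := by
    rw [← norm_iteratedFDeriv_fderiv, norm_iteratedFDeriv_one]
  rw [eLpNorm_congr_norm_ae (g := fderiv ℝ (fderiv ℝ u)) (.of_forall hnorm)]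
  exact eLpNorm_le_eLpNorm_fderiv_of_eq μ (hu.fderiv_right one_add_one_eq_two.le)
    (hc.fderiv ℝ) hp hn hp'

theorem exists_norm_le_mul_eLpNorm_add_eLpNorm_iteratedFDeriv_two
    (hE : Module.finrank ℝ E = 3) :
    ∃ A : ℝ≥0, ∀ u : E → F, ContDiff ℝ 2 u → HasCompactSupport u → ∀ x,
      ‖u x‖ ≤ A * ((eLpNorm u 2 μ).toReal + (eLpNorm (iteratedFDeriv ℝ 2 u) 2 μ).toReal) := by
  obtain ⟨A, hA⟩ := exists_enorm_le_mul_eLpNorm_add_eLpNorm_fderiv F μ (p := 6) (q := 2)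
    (by norm_num) (by rw [hE]; norm_num) one_le_two
  set S := SNormLESNormFDerivOfEqConst (E →L[ℝ] F) μ 2
  refine ⟨A * (1 + S), fun u hu hc x => ?_⟩
  have ha := (hu.continuous.memLp_of_hasCompactSupport (μ := μ) (p := 2) hc).eLpNorm_ne_top
  have hd := (hu.continuous_iteratedFDeriv'.memLp_of_hasCompactSupport (μ := μ) (p := 2)
    (hc.iteratedFDeriv 2)).eLpNorm_ne_top
  have hsobolev : eLpNorm (fderiv ℝ u) 6 μ ≤ S * eLpNorm (iteratedFDeriv ℝ 2 u) 2 μ := by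
    exact_mod_cast eLpNorm_fderiv_le_eLpNorm_iteratedFDeriv_two μ hu hc (p := 2) (p' := 6)
      one_le_two (by simp [hE]) (by rw [hE]; norm_num)
  set a := eLpNorm u 2 μ
  set d := eLpNorm (iteratedFDeriv ℝ 2 u) 2 μ
  have hbound : ‖u x‖ₑ ≤ (A * (1 + S) : ℝ≥0) * (a + d) :=
    calc ‖u x‖ₑ ≤ A * (a + eLpNorm (fderiv ℝ u) 6 μ) := hA u (hu.of_le one_le_two) x
      _ ≤ A * (a + S * d + (S * a + d)) := by
          rw [add_assoc]
          gcongr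
          exact hsobolev.trans le_self_add
      _ = (A * (1 + S) : ℝ≥0) * (a + d) := by push_cast; ring
  simpa only [toReal_enorm, ENNReal.toReal_mul, ENNReal.toReal_add ha hd, ENNReal.coe_toReal]
    using ENNReal.toReal_mono (by finiteness) hbound

end SupBounds

section WeightedCubic

variable {E F : Type*} [NormedAddCommGroup E]

theorem eLpNorm_one_add_norm_mul_norm_le [MeasurableSpace E] [OpensMeasurableSpace E]
    [NormedAddCommGroup F] {μ : Measure E} {f : E → F} (hf : AEStronglyMeasurable f μ)
    {p : ℝ≥0∞} (hp : 1 ≤ p) :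
    eLpNorm (fun x => (1 + ‖x‖) * ‖f x‖) p μ ≤
      eLpNorm f p μ + eLpNorm (fun x => ‖x‖ * ‖f x‖) p μ := by
  simp only [add_mul, one_mul]
  rw [← eLpNorm_norm f]
  exact eLpNorm_add_le hf.norm (measurable_norm.aestronglyMeasurable.mul hf.norm) hp

theorem eLpNorm_mul_norm_le_of_norm_le_mul {α G : Type*} [MeasurableSpace α] {μ : Measure α}
    [NormedAddCommGroup F] [NormedAddCommGroup G] {f : α → F} {g : α → G} {c : ℝ≥0}
    (h : ∀ᵐ x ∂μ, ‖g x‖ ≤ c * ‖f x‖) (w : α → ℝ) (p : ℝ≥0∞) :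
    eLpNorm (fun x => w x * ‖g x‖) p μ ≤ c * eLpNorm (fun x => w x * ‖f x‖) p μ := by
  refine eLpNorm_le_nnreal_smul_eLpNorm_of_ae_le_mul (h.mono fun x hx => ?_) p
  rw [← NNReal.coe_le_coe, NNReal.coe_mul, coe_nnnorm, coe_nnnorm, norm_mul, norm_mul,
    norm_norm, norm_norm, mul_left_comm]
  gcongr

variable [NormedSpace ℝ E] [NormedAddCommGroup F] [InnerProductSpace ℝ F]

theorem norm_fderiv_norm_sq_smul_le {u : E → F} {x : E} (hu : DifferentiableAt ℝ u x) :
    ‖fderiv ℝ (fun x => ‖u x‖ ^ 2 • u x) x‖ ≤ 3 * ‖u x‖ ^ 2 * ‖fderiv ℝ u x‖ := by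
  have hfderiv := (hu.hasFDerivAt.norm_sq.fun_smul hu.hasFDerivAt).fderiv
  have hinner : ‖innerSL ℝ (u x) ∘SL fderiv ℝ u x‖ ≤ ‖u x‖ * ‖fderiv ℝ u x‖ := by
    simpa only [innerSL_apply_norm] using
      ContinuousLinearMap.opNorm_comp_le (innerSL ℝ (u x)) (fderiv ℝ u x)
  rw [hfderiv]
  calc _ ≤ ‖u x‖ ^ 2 * ‖fderiv ℝ u x‖ + 2 * ‖innerSL ℝ (u x) ∘SL fderiv ℝ u x‖ * ‖u x‖ := by
        refine (norm_add_le _ _).trans_eq ?_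
        simp [norm_smul, ← Nat.cast_smul_eq_nsmul ℝ]
    _ ≤ ‖u x‖ ^ 2 * ‖fderiv ℝ u x‖ + 2 * (‖u x‖ * ‖fderiv ℝ u x‖) * ‖u x‖ := by gcongr
    _ = 3 * ‖u x‖ ^ 2 * ‖fderiv ℝ u x‖ := by ring

theorem eLpNorm_weighted_norm_sq_smul_add_le_of_norm_le [MeasurableSpace E]
    [OpensMeasurableSpace E] [SecondCountableTopology E] (μ : Measure E) {u : E → F}
    (hu : ContDiff ℝ 1 u) {S : ℝ≥0} (hS : ∀ x, ‖u x‖ ≤ S) {p : ℝ≥0∞} (hp : 1 ≤ p) :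
    eLpNorm (fun x => (1 + ‖x‖) * ‖‖u x‖ ^ 2 • u x‖) p μ +
        eLpNorm (fun x => (1 + ‖x‖) * ‖fderiv ℝ (fun x => ‖u x‖ ^ 2 • u x) x‖) p μ ≤
      (3 * S ^ 2 : ℝ≥0) * ((eLpNorm u p μ + eLpNorm (fun x => ‖x‖ * ‖u x‖) p μ) +
        (eLpNorm (fderiv ℝ u) p μ + eLpNorm (fun x => ‖x‖ * ‖fderiv ℝ u x‖) p μ)) := by
  have hvalue (x : E) : ‖‖u x‖ ^ 2 • u x‖ ≤ (3 * S ^ 2 : ℝ≥0) * ‖u x‖ := by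
    rw [norm_smul, norm_pow, norm_norm]
    push_cast
    gcongr
    nlinarith [hS x, norm_nonneg (u x)]
  have hgradient (x : E) :
      ‖fderiv ℝ (fun x => ‖u x‖ ^ 2 • u x) x‖ ≤ (3 * S ^ 2 : ℝ≥0) * ‖fderiv ℝ u x‖ := by
    refine (norm_fderiv_norm_sq_smul_le (hu.differentiable one_ne_zero x)).trans ?_
    push_cast
    gcongr
    exact hS x
  rw [mul_add]
  refine add_le_add
    ((eLpNorm_mul_norm_le_of_norm_le_mul (.of_forall hvalue) _ p).trans ?_)
    ((eLpNorm_mul_norm_le_of_norm_le_mul (.of_forall hgradient) _ p).trans ?_) <;> gcongr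
  · exact eLpNorm_one_add_norm_mul_norm_le hu.continuous.aestronglyMeasurable hp
  · exact eLpNorm_one_add_norm_mul_norm_le
      (hu.continuous_fderiv one_ne_zero).aestronglyMeasurable hp

end WeightedCubic

theorem eLpNorm_norm_mul_norm_ne_top_of_hasCompactSupport {E F : Type*} [NormedAddCommGroup E]
    [MeasurableSpace E] [OpensMeasurableSpace E] [NormedAddCommGroup F] (μ : Measure E)
    [IsFiniteMeasureOnCompacts μ] {f : E → F} (hf : Continuous f) (hc : HasCompactSupport f)
    (p : ℝ≥0∞) : eLpNorm (fun x => ‖x‖ * ‖f x‖) p μ ≠ ∞ :=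
  ((continuous_norm.mul hf.norm).memLp_of_hasCompactSupport hc.norm.mul_left).eLpNorm_ne_top

theorem weighted_cubic_nonlinearity_estimate_general {E F : Type*} [NormedAddCommGroup E]
    [NormedSpace ℝ E] [MeasurableSpace E] [BorelSpace E] [FiniteDimensional ℝ E]
    [NormedAddCommGroup F] [InnerProductSpace ℝ F] [FiniteDimensional ℝ F]
    (μ : Measure E) [μ.IsAddHaarMeasure] (hE : Module.finrank ℝ E = 3) :
    ∃ C : ℝ, 0 < C ∧ ∀ u : E → F, ContDiff ℝ 2 u → HasCompactSupport u →
      ∀ M : ℝ,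
        M = (eLpNorm u 2 μ).toReal + (eLpNorm (fderiv ℝ u) 2 μ).toReal +
            (eLpNorm (iteratedFDeriv ℝ 2 u) 2 μ).toReal →
      ∀ N : E → F, N = (fun x => ‖u x‖ ^ 2 • u x) →
      eLpNorm (fun x => (1 + ‖x‖) * ‖N x‖) 2 μ +
        eLpNorm (fun x => (1 + ‖x‖) * ‖fderiv ℝ N x‖) 2 μ ≤
        ENNReal.ofReal (C * (M ^ 3 + M ^ 2 *
          ((eLpNorm (fun x => ‖x‖ * ‖u x‖) 2 μ).toReal +
            (eLpNorm (fun x => ‖x‖ * ‖fderiv ℝ u x‖) 2 μ).toReal))) := by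
  obtain ⟨A, hA⟩ := exists_norm_le_mul_eLpNorm_add_eLpNorm_iteratedFDeriv_two F μ hE
  refine ⟨3 * A ^ 2 + 1, by positivity, ?_⟩
  rintro u hu hc M hM _ rfl
  have hgrad := hu.continuous_fderiv two_ne_zero
  have ha := (hu.continuous.memLp_of_hasCompactSupport (μ := μ) (p := 2) hc).eLpNorm_ne_top
  have hb := (hgrad.memLp_of_hasCompactSupport (μ := μ) (p := 2) (hc.fderiv ℝ)).eLpNorm_ne_top
  have hwa := eLpNorm_norm_mul_norm_ne_top_of_hasCompactSupport μ hu.continuous hc 2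
  have hwb := eLpNorm_norm_mul_norm_ne_top_of_hasCompactSupport μ hgrad (hc.fderiv ℝ) 2
  lift M to ℝ≥0 using hM ▸ by positivity
  have hsup (x : E) : ‖u x‖ ≤ (A * M : ℝ≥0) := by
    rw [NNReal.coe_mul, hM, add_right_comm]
    exact (hA u hu hc x).trans (mul_le_mul_of_nonneg_left
      (le_add_of_nonneg_right ENNReal.toReal_nonneg) A.coe_nonneg)
  refine (eLpNorm_weighted_norm_sq_smul_add_le_of_norm_le μ (hu.of_le one_le_two) hsup
    one_le_two).trans ((ENNReal.le_ofReal_iff_toReal_le (by finiteness) (by positivity)).2 ?_)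
  rw [ENNReal.toReal_mul, ENNReal.toReal_add (by finiteness) (by finiteness),
    ENNReal.toReal_add ha hwa, ENNReal.toReal_add hb hwb, ENNReal.coe_toReal, add_add_add_comm]
  set W := (eLpNorm (fun x => ‖x‖ * ‖u x‖) 2 μ).toReal +
    (eLpNorm (fun x => ‖x‖ * ‖fderiv ℝ u x‖) 2 μ).toReal
  calc _ ≤ ((3 * (A * M) ^ 2 : ℝ≥0) : ℝ) * (M + W) := by
        gcongr
        exact hM ▸ le_add_of_nonneg_right ENNReal.toReal_nonneg
    _ = 3 * A ^ 2 * (M ^ 3 + M ^ 2 * W) := by push_cast; ring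
    _ ≤ (3 * A ^ 2 + 1) * (M ^ 3 + M ^ 2 * W) := by gcongr; exact le_add_of_nonneg_right zero_le_one

/-- Weighted `H¹₁` estimate of the cubic nonlinearity `N = |u|²u`:
`‖(1+|x|)N‖₂ + ‖(1+|x|)∇N‖₂ ≤ C (M³ + M² (‖|x|u‖₂ + ‖|x|∇u‖₂))`
where `M = ‖u‖₂ + ‖∇u‖₂ + ‖∇²u‖₂`. -/
theorem weighted_cubic_nonlinearity_estimate :
    ∃ C : ℝ, 0 < C ∧ ∀ u : E³ → ℂ, ContDiff ℝ 2 u → HasCompactSupport u →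
      ∀ M : ℝ,
        M = (eLpNorm u 2 (volume : Measure E³)).toReal +
            (eLpNorm (fderiv ℝ u) 2 (volume : Measure E³)).toReal +
            (eLpNorm (iteratedFDeriv ℝ 2 u) 2 (volume : Measure E³)).toReal →
      ∀ N : E³ → ℂ, N = (fun x : E³ => ((‖u x‖ ^ 2 : ℝ) : ℂ) * u x) →
      eLpNorm (fun x : E³ => (1 + ‖x‖) * ‖N x‖) 2 (volume : Measure E³) +
        eLpNorm (fun x : E³ => (1 + ‖x‖) * ‖fderiv ℝ N x‖) 2 (volume : Measure E³) ≤
        ENNReal.ofReal (C * (M ^ 3 + M ^ 2 *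
          ((eLpNorm (fun x : E³ => ‖x‖ * ‖u x‖) 2 (volume : Measure E³)).toReal +
            (eLpNorm (fun x : E³ => ‖x‖ * ‖fderiv ℝ u x‖) 2
              (volume : Measure E³)).toReal))) := by
  simpa only [Complex.real_smul] using
    weighted_cubic_nonlinearity_estimate_general (F := ℂ) volume finrank_euclideanSpace_fin
end
end

section
/- There exists a constant C > 0 such that for all continuously differentiable, compactly supported functions v, w : ℝ³ → ℂ, one has ∫_{ℝ³} |2|v|²w + v²·conj(w) + |w|²w + |w|²v| dx ≤ C ( ‖v‖_{L^∞} ‖(1+|x|)v‖_{L²} ‖∇w‖_{L²} + ‖w‖_{L²}^{3/2} ‖∇w‖_{L²}^{3/2} + ‖v‖_{L³} ‖w‖_{L²} ‖∇w‖_{L²} ). -/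
open MeasureTheory
open scoped ENNReal NNReal

noncomputable section

local notation "E³" => EuclideanSpace ℝ (Fin 3)

open Module (Basis finrank)

/-! By Hölder's inequality each cubic term is bounded by a product of three Lebesgue norms, in which
`w` is then controlled by `∇w`. For `|v|²|w| = |v| · (1 + |x|)|v| · |w| / (1 + |x|)` this is Hardy's
inequality, obtained by integrating `div X` against `|w|²` for the field `X = x / (1 + |x|²)`, which
satisfies `div X ≥ (d - 2) / (1 + |x|²)` and `|X|² ≤ 1 / (1 + |x|²)`. For `|w|²|v|` and `|w|³` it is
Sobolev's inequality for the exponent `6`, in the second case after interpolating `L³` between `L²`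
and `L⁶`. -/

section Lebesgue

variable {α F G H : Type*} [MeasurableSpace α] {μ : Measure α} [NormedAddCommGroup F]
  [NormedAddCommGroup G] [NormedAddCommGroup H] {p q r : ℝ≥0∞}

theorem lintegral_enorm_mul_mul_le {f : α → F} {g : α → G} {h : α → H} (p q r s : ℝ≥0∞)
    [ENNReal.HolderTriple q r s] [ENNReal.HolderTriple p s 1] (hf : AEStronglyMeasurable f μ)
    (hg : AEStronglyMeasurable g μ) (hh : AEStronglyMeasurable h μ) :
    ∫⁻ x, ‖f x‖ₑ * ‖g x‖ₑ * ‖h x‖ₑ ∂μ ≤ eLpNorm f p μ * eLpNorm g q μ * eLpNorm h r μ := by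
  let f' x := ‖f x‖
  let g' x := ‖g x‖
  let h' x := ‖h x‖
  calc ∫⁻ x, ‖f x‖ₑ * ‖g x‖ₑ * ‖h x‖ₑ ∂μ
      = eLpNorm (f' • g' • h') 1 μ := by
        simp [f', g', h', eLpNorm_one_eq_lintegral_enorm, mul_assoc]
    _ ≤ eLpNorm f' p μ * eLpNorm (g' • h') s μ :=
        eLpNorm_smul_le_mul_eLpNorm (hg.norm.smul hh.norm) hf.norm
    _ ≤ eLpNorm f' p μ * (eLpNorm g' q μ * eLpNorm h' r μ) := by
        gcongr
        exact eLpNorm_smul_le_mul_eLpNorm hh.norm hg.norm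
    _ = eLpNorm f p μ * eLpNorm g q μ * eLpNorm h r μ := by
        simp only [f', g', h', eLpNorm_norm, mul_assoc]

theorem eLpNorm_le_eLpNorm_rpow_mul_eLpNorm_rpow {f : α → F} (hf : AEStronglyMeasurable f μ)
    {θ η : ℝ} (hθ : 0 < θ) (hη : 0 < η) (hθη : θ + η = 1)
    (hr : ENNReal.ofReal θ / p + ENNReal.ofReal η / q = r⁻¹) :
    eLpNorm f r μ ≤ eLpNorm f p μ ^ θ * eLpNorm f q μ ^ η := by
  have hθ' : ENNReal.ofReal θ ≠ 0 := by simpa using hθ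
  have hη' : ENNReal.ofReal η ≠ 0 := by simpa using hη
  have : ENNReal.HolderTriple (p / ENNReal.ofReal θ) (q / ENNReal.ofReal η) r := ⟨by
    rw [ENNReal.inv_div (.inl ENNReal.ofReal_ne_top) (.inl hθ'),
      ENNReal.inv_div (.inl ENNReal.ofReal_ne_top) (.inl hη'), hr]⟩
  have hsplit : (fun x ↦ ‖f x‖) = (fun x ↦ ‖f x‖ ^ θ) • fun x ↦ ‖f x‖ ^ η := by
    ext x
    simp [← Real.rpow_add_of_nonneg (norm_nonneg (f x)) hθ.le hη.le, hθη]
  calc eLpNorm f r μ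
      = eLpNorm ((fun x ↦ ‖f x‖ ^ θ) • fun x ↦ ‖f x‖ ^ η) r μ := by rw [← hsplit, eLpNorm_norm]
    _ ≤ eLpNorm (fun x ↦ ‖f x‖ ^ θ) (p / ENNReal.ofReal θ) μ *
          eLpNorm (fun x ↦ ‖f x‖ ^ η) (q / ENNReal.ofReal η) μ :=
        eLpNorm_smul_le_mul_eLpNorm (hf.norm.aemeasurable.pow_const η).aestronglyMeasurable
          (hf.norm.aemeasurable.pow_const θ).aestronglyMeasurable
    _ = eLpNorm f p μ ^ θ * eLpNorm f q μ ^ η := by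
        rw [eLpNorm_norm_rpow f hθ, eLpNorm_norm_rpow f hη,
          ENNReal.div_mul_cancel hθ' ENNReal.ofReal_ne_top,
          ENNReal.div_mul_cancel hη' ENNReal.ofReal_ne_top]

theorem memLp_of_memLp_of_memLp {f : α → F} (hp : MemLp f p μ) (hq : MemLp f q μ) {θ η : ℝ}
    (hθ : 0 < θ) (hη : 0 < η) (hθη : θ + η = 1)
    (hr : ENNReal.ofReal θ / p + ENNReal.ofReal η / q = r⁻¹) : MemLp f r μ :=
  ⟨hp.1, (eLpNorm_le_eLpNorm_rpow_mul_eLpNorm_rpow hp.1 hθ hη hθη hr).trans_lt <|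
    ENNReal.mul_lt_top (ENNReal.rpow_lt_top_of_nonneg hθ.le hp.2.ne)
      (ENNReal.rpow_lt_top_of_nonneg hη.le hq.2.ne)⟩

theorem memLp_three_of_memLp_one_add_norm_mul_two {E : Type*} [SeminormedAddCommGroup E]
    [MeasurableSpace E] {μ : Measure E} {f : E → F} (hf : MemLp f ⊤ μ)
    (hf' : MemLp (fun x ↦ (1 + ‖x‖) * ‖f x‖) 2 μ) : MemLp f 3 μ := by
  have hf₂ : MemLp f 2 μ := hf'.mono hf.1 <| .of_forall fun x ↦ by
    rw [Real.norm_of_nonneg (by positivity)]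
    exact le_mul_of_one_le_left (norm_nonneg _) (by simp)
  refine memLp_of_memLp_of_memLp hf₂ hf (θ := 2 / 3) (η := 1 / 3) (by norm_num) (by norm_num)
    (by norm_num) ?_
  rw [ENNReal.div_top, add_zero,
    ← ENNReal.toReal_eq_toReal_iff' (by finiteness) (by simp)]
  norm_num

theorem eLpNorm_two_sq_eq_ofReal_integral {f : α → F} (hf : MemLp f 2 μ) :
    eLpNorm f 2 μ ^ 2 = ENNReal.ofReal (∫ x, ‖f x‖ ^ 2 ∂μ) := by
  rw [hf.eLpNorm_eq_integral_rpow_norm two_ne_zero ENNReal.ofNat_ne_top,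
    ← ENNReal.ofReal_pow (by positivity), ← Real.rpow_mul_natCast (by positivity)]
  simp

end Lebesgue

section Divergence

variable {E : Type*} [NormedAddCommGroup E] [NormedSpace ℝ E]

/-- The divergence of a vector field, as the trace of its derivative; it is the density in the
integration by parts formula `integral_mul_divergence`. -/
def divergence (X : E → E) (x : E) : ℝ :=
  LinearMap.trace ℝ E (fderiv ℝ X x)

theorem divergence_eq_sum_coord {ι : Type*} [Fintype ι] (b : Basis ι ℝ E) (X : E → E) (x : E) :
    divergence X x = ∑ i, b.coord i (fderiv ℝ X x (b i)) := by
  classical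
  simp [divergence, LinearMap.trace_eq_matrix_trace ℝ b, Matrix.trace, LinearMap.toMatrix_apply]

theorem continuous_divergence [FiniteDimensional ℝ E] {X : E → E} (hX : ContDiff ℝ 1 X) :
    Continuous (divergence X) := by
  rw [funext (divergence_eq_sum_coord (Module.finBasis ℝ E) X)]
  exact continuous_finsetSum _ fun i _ ↦ (LinearMap.continuous_of_finiteDimensional _).comp
    ((hX.continuous_fderiv one_ne_zero).clm_apply continuous_const)

variable [MeasurableSpace E] [BorelSpace E] {μ : Measure E} {f g : E → ℝ} {X : E → E}

section Integrability

variable [IsFiniteMeasureOnCompacts μ]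

theorem integrable_mul_divergence [FiniteDimensional ℝ E] (hf : Continuous f)
    (hfc : HasCompactSupport f) (hX : ContDiff ℝ 1 X) :
    Integrable (fun x ↦ f x * divergence X x) μ :=
  (hf.mul (continuous_divergence hX)).integrable_of_hasCompactSupport hfc.mul_right

theorem integrable_fderiv_apply (hf : ContDiff ℝ 1 f) (hfc : HasCompactSupport f)
    (hX : Continuous X) : Integrable (fun x ↦ fderiv ℝ f x (X x)) μ :=
  ((hf.continuous_fderiv one_ne_zero).clm_apply hX).integrable_of_hasCompactSupport <|
    (hfc.fderiv ℝ).mono fun x hx hx' ↦ hx (by simp [hx'])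

theorem integrable_fderiv_apply_mul (hf : ContDiff ℝ 1 f) (hfc : HasCompactSupport f)
    (hg : Continuous g) (v : E) : Integrable (fun x ↦ fderiv ℝ f x v * g x) μ :=
  (((hf.continuous_fderiv one_ne_zero).clm_apply continuous_const).mul hg)
    |>.integrable_of_hasCompactSupport (hfc.fderiv_apply ℝ v).mul_right

theorem integrable_mul_fderiv_apply (hf : Continuous f) (hfc : HasCompactSupport f)
    (hg : ContDiff ℝ 1 g) (v : E) : Integrable (fun x ↦ f x * fderiv ℝ g x v) μ :=
  (hf.mul ((hg.continuous_fderiv one_ne_zero).clm_apply continuous_const))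
    |>.integrable_of_hasCompactSupport hfc.mul_right

end Integrability

variable [FiniteDimensional ℝ E] [μ.IsAddHaarMeasure]

theorem integral_mul_fderiv_eq_neg_fderiv_mul (hf : ContDiff ℝ 1 f) (hfc : HasCompactSupport f)
    (hg : ContDiff ℝ 1 g) (v : E) :
    ∫ x, f x * fderiv ℝ g x v ∂μ = -∫ x, fderiv ℝ f x v * g x ∂μ :=
  integral_mul_fderiv_eq_neg_fderiv_mul_of_integrable
    (integrable_fderiv_apply_mul hf hfc hg.continuous v)
    (integrable_mul_fderiv_apply hf.continuous hfc hg v)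
    ((hf.continuous.mul hg.continuous).integrable_of_hasCompactSupport hfc.mul_right)
    (fun x _ ↦ hf.differentiable one_ne_zero x) (fun x _ ↦ hg.differentiable one_ne_zero x)

theorem integral_mul_divergence (hf : ContDiff ℝ 1 f) (hfc : HasCompactSupport f)
    (hX : ContDiff ℝ 1 X) :
    ∫ x, f x * divergence X x ∂μ = -∫ x, fderiv ℝ f x (X x) ∂μ := by
  let b := Module.finBasis ℝ E
  let ℓ i : E →L[ℝ] ℝ := (b.coord i).toContinuousLinearMap
  have hℓX i : ContDiff ℝ 1 (ℓ i ∘ X) := (ℓ i).contDiff.comp hX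
  have hℓX' i x : fderiv ℝ (ℓ i ∘ X) x (b i) = ℓ i (fderiv ℝ X x (b i)) := by
    rw [((ℓ i).hasFDerivAt.comp x (hX.differentiable one_ne_zero x).hasFDerivAt).fderiv,
      ContinuousLinearMap.comp_apply]
  have hdiv x : f x * divergence X x = ∑ i, f x * fderiv ℝ (ℓ i ∘ X) x (b i) := by
    simp only [hℓX', divergence_eq_sum_coord b, Finset.mul_sum]
    rfl
  have happly x : fderiv ℝ f x (X x) = ∑ i, fderiv ℝ f x (b i) * (ℓ i ∘ X) x := by
    conv_lhs => rw [← b.sum_repr (X x), map_sum]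
    simp [ℓ, mul_comm]
  calc ∫ x, f x * divergence X x ∂μ
      = ∑ i, ∫ x, f x * fderiv ℝ (ℓ i ∘ X) x (b i) ∂μ := by
        simp only [hdiv]
        exact integral_finsetSum _ fun i _ ↦
          integrable_mul_fderiv_apply hf.continuous hfc (hℓX i) (b i)
    _ = ∑ i, -∫ x, fderiv ℝ f x (b i) * (ℓ i ∘ X) x ∂μ :=
        Finset.sum_congr rfl fun i _ ↦ integral_mul_fderiv_eq_neg_fderiv_mul hf hfc (hℓX i) (b i)
    _ = -∫ x, fderiv ℝ f x (X x) ∂μ := by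
        simp only [happly, Finset.sum_neg_distrib]
        rw [integral_finsetSum _ fun i _ ↦
          integrable_fderiv_apply_mul hf hfc (hℓX i).continuous (b i)]

end Divergence

section Hardy

theorem hasCompactSupport_norm_sq {α F : Type*} [TopologicalSpace α] [NormedAddCommGroup F]
    {f : α → F} (hf : HasCompactSupport f) : HasCompactSupport fun x ↦ ‖f x‖ ^ 2 :=
  hf.comp_left (g := fun y ↦ ‖y‖ ^ 2) (by simp)

theorem continuous_inv_one_add_norm {E : Type*} [SeminormedAddCommGroup E] :
    Continuous fun x : E ↦ (1 + ‖x‖)⁻¹ :=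
  Continuous.inv₀ (by fun_prop) fun _ ↦ by positivity

variable {E F : Type*} [NormedAddCommGroup E] [InnerProductSpace ℝ E] [NormedAddCommGroup F]
  [InnerProductSpace ℝ F]

/-- The vector field `x / (1 + |x|²)`, a bounded smooth substitute for the field `x / |x|²`, whose
divergence `(d - 2) / |x|²` is a multiple of the weight in Hardy's inequality. -/
def hardyField (x : E) : E :=
  (1 + ‖x‖ ^ 2)⁻¹ • x

theorem contDiff_inv_one_add_norm_sq {n : WithTop ℕ∞} :
    ContDiff ℝ n fun x : E ↦ (1 + ‖x‖ ^ 2)⁻¹ :=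
  (contDiff_const.add (contDiff_norm_sq ℝ)).inv fun _ ↦ by positivity

theorem contDiff_hardyField {n : WithTop ℕ∞} : ContDiff ℝ n (hardyField : E → E) :=
  contDiff_inv_one_add_norm_sq.smul contDiff_id

theorem norm_hardyField_sq_le (x : E) : ‖hardyField x‖ ^ 2 ≤ (1 + ‖x‖ ^ 2)⁻¹ := by
  rw [hardyField, norm_smul, mul_pow, norm_inv, Real.norm_of_nonneg (by positivity), inv_pow,
    inv_mul_le_iff₀ (by positivity), sq (1 + _), mul_inv_cancel_right₀ (by positivity)]
  linarith

theorem hasFDerivAt_hardyField (x : E) :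
    HasFDerivAt hardyField ((1 + ‖x‖ ^ 2)⁻¹ • ContinuousLinearMap.id ℝ E +
      (-((1 + ‖x‖ ^ 2) ^ 2)⁻¹ • (2 • innerSL ℝ x)).smulRight x) x :=
  ((hasDerivAt_inv (by positivity)).comp_hasFDerivAt x
    ((hasStrictFDerivAt_norm_sq x).hasFDerivAt.const_add 1)).smul (hasFDerivAt_id x)

theorem divergence_hardyField [FiniteDimensional ℝ E] (x : E) :
    divergence hardyField x =
      finrank ℝ E * (1 + ‖x‖ ^ 2)⁻¹ - 2 * ‖x‖ ^ 2 * ((1 + ‖x‖ ^ 2) ^ 2)⁻¹ := by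
  rw [divergence, (hasFDerivAt_hardyField x).fderiv]
  simp [LinearMap.trace_id]
  ring

theorem finrank_sub_two_mul_le_divergence_hardyField [FiniteDimensional ℝ E] (x : E) :
    ((finrank ℝ E : ℝ) - 2) * (1 + ‖x‖ ^ 2)⁻¹ ≤ divergence hardyField x := by
  have h : ‖x‖ ^ 2 * ((1 + ‖x‖ ^ 2) ^ 2)⁻¹ ≤ (1 + ‖x‖ ^ 2)⁻¹ := by
    rw [← div_eq_mul_inv, ← one_div, div_le_div_iff₀ (by positivity) (by positivity)]
    nlinarith [sq_nonneg ‖x‖]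
  rw [divergence_hardyField]
  linarith

theorem neg_fderiv_norm_sq_apply_le {w : E → F} {x : E} (hw : DifferentiableAt ℝ w x) (y : E) :
    -fderiv ℝ (fun z ↦ ‖w z‖ ^ 2) x y ≤ 2 * ‖w x‖ * (‖fderiv ℝ w x‖ * ‖y‖) := by
  have hy := neg_le_of_abs_le <| (abs_real_inner_le_norm (w x) (fderiv ℝ w x y)).trans <|
    mul_le_mul_of_nonneg_left ((fderiv ℝ w x).le_opNorm y) (norm_nonneg _)
  rw [hw.hasFDerivAt.norm_sq.fderiv]
  simp only [smul_apply, ContinuousLinearMap.comp_apply, innerSL_apply_apply]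
  rw [nsmul_eq_mul, Nat.cast_ofNat]
  linarith

theorem neg_fderiv_norm_sq_hardyField_le {w : E → F} {x : E} (hw : DifferentiableAt ℝ w x) {c : ℝ}
    (hc : 0 < c) :
    -fderiv ℝ (fun z ↦ ‖w z‖ ^ 2) x (hardyField x) ≤
      c / 2 * (‖w x‖ ^ 2 * (1 + ‖x‖ ^ 2)⁻¹) + 2 / c * ‖fderiv ℝ w x‖ ^ 2 := by
  have hyoung (s t : ℝ) : 2 * s * t ≤ c / 2 * s ^ 2 + 2 / c * t ^ 2 := by
    have : c / 2 * s ^ 2 + 2 / c * t ^ 2 - 2 * s * t = c / 2 * (s - 2 / c * t) ^ 2 := by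
      field_simp
      ring
    have : 0 ≤ c / 2 * (s - 2 / c * t) ^ 2 := by positivity
    linarith
  calc -fderiv ℝ (fun z ↦ ‖w z‖ ^ 2) x (hardyField x)
      ≤ 2 * ‖w x‖ * (‖fderiv ℝ w x‖ * ‖hardyField x‖) := neg_fderiv_norm_sq_apply_le hw _
    _ = 2 * (‖w x‖ * ‖hardyField x‖) * ‖fderiv ℝ w x‖ := by ring
    _ ≤ c / 2 * (‖w x‖ * ‖hardyField x‖) ^ 2 + 2 / c * ‖fderiv ℝ w x‖ ^ 2 := hyoung _ _
    _ ≤ c / 2 * (‖w x‖ ^ 2 * (1 + ‖x‖ ^ 2)⁻¹) + 2 / c * ‖fderiv ℝ w x‖ ^ 2 := by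
        rw [mul_pow]
        gcongr
        exact norm_hardyField_sq_le x

variable [MeasurableSpace E] [BorelSpace E] {μ : Measure E}

theorem integrable_norm_sq_mul_inv_one_add_norm_sq {G : Type*} [NormedAddCommGroup G]
    [IsFiniteMeasureOnCompacts μ] {f : E → G} (hf : Continuous f) (hfc : HasCompactSupport f) :
    Integrable (fun x ↦ ‖f x‖ ^ 2 * (1 + ‖x‖ ^ 2)⁻¹) μ :=
  ((hf.norm.pow 2).mul (contDiff_inv_one_add_norm_sq (n := 0)).continuous)
    |>.integrable_of_hasCompactSupport (hasCompactSupport_norm_sq hfc).mul_right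

variable [FiniteDimensional ℝ E] [μ.IsAddHaarMeasure] {w : E → F}

theorem finrank_sub_two_mul_integral_le_integral_neg_fderiv (hw : ContDiff ℝ 1 w)
    (hwc : HasCompactSupport w) :
    ((finrank ℝ E : ℝ) - 2) * ∫ x, ‖w x‖ ^ 2 * (1 + ‖x‖ ^ 2)⁻¹ ∂μ ≤
      ∫ x, -fderiv ℝ (fun z ↦ ‖w z‖ ^ 2) x (hardyField x) ∂μ := by
  have hu : ContDiff ℝ 1 fun x ↦ ‖w x‖ ^ 2 := hw.norm_sq ℝ
  have huc : HasCompactSupport fun x ↦ ‖w x‖ ^ 2 := hasCompactSupport_norm_sq hwc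
  rw [integral_neg, ← integral_mul_divergence hu huc contDiff_hardyField, ← integral_const_mul]
  refine integral_mono
    ((integrable_norm_sq_mul_inv_one_add_norm_sq hw.continuous hwc).const_mul _)
    (integrable_mul_divergence hu.continuous huc contDiff_hardyField) fun x ↦ ?_
  rw [mul_left_comm]
  exact mul_le_mul_of_nonneg_left (finrank_sub_two_mul_le_divergence_hardyField x) (by positivity)

theorem integral_norm_sq_mul_inv_one_add_norm_sq_le (hE : 2 < finrank ℝ E) (hw : ContDiff ℝ 1 w)
    (hwc : HasCompactSupport w) :
    ∫ x, ‖w x‖ ^ 2 * (1 + ‖x‖ ^ 2)⁻¹ ∂μ ≤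
      (2 / ((finrank ℝ E : ℝ) - 2)) ^ 2 * ∫ x, ‖fderiv ℝ w x‖ ^ 2 ∂μ := by
  have hc : 0 < (finrank ℝ E : ℝ) - 2 := sub_pos.2 (by exact_mod_cast hE)
  have hflux := finrank_sub_two_mul_integral_le_integral_neg_fderiv (μ := μ) hw hwc
  generalize (finrank ℝ E : ℝ) - 2 = c at hc hflux ⊢
  have hweight := (integrable_norm_sq_mul_inv_one_add_norm_sq (μ := μ) hw.continuous hwc).const_mul
    (c / 2)
  have hgrad := (((hw.continuous_fderiv one_ne_zero).memLp_of_hasCompactSupport (μ := μ)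
    (hwc.fderiv ℝ)).integrable_norm_pow two_ne_zero).const_mul (2 / c)
  have habsorb : c * ∫ x, ‖w x‖ ^ 2 * (1 + ‖x‖ ^ 2)⁻¹ ∂μ ≤
      c / 2 * ∫ x, ‖w x‖ ^ 2 * (1 + ‖x‖ ^ 2)⁻¹ ∂μ + 2 / c * ∫ x, ‖fderiv ℝ w x‖ ^ 2 ∂μ := by
    rw [← integral_const_mul (c / 2), ← integral_const_mul (2 / c), ← integral_add hweight hgrad]
    exact hflux.trans <| integral_mono
      (integrable_fderiv_apply (hw.norm_sq ℝ) (hasCompactSupport_norm_sq hwc)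
        (contDiff_hardyField (n := 0)).continuous).neg
      (hweight.add hgrad)
      fun x ↦ neg_fderiv_norm_sq_hardyField_le (hw.differentiable one_ne_zero x) hc
  calc ∫ x, ‖w x‖ ^ 2 * (1 + ‖x‖ ^ 2)⁻¹ ∂μ
      = 2 / c * (c / 2 * ∫ x, ‖w x‖ ^ 2 * (1 + ‖x‖ ^ 2)⁻¹ ∂μ) := by field_simp
    _ ≤ 2 / c * (2 / c * ∫ x, ‖fderiv ℝ w x‖ ^ 2 ∂μ) :=
        mul_le_mul_of_nonneg_left (by linarith) (by positivity)
    _ = (2 / c) ^ 2 * ∫ x, ‖fderiv ℝ w x‖ ^ 2 ∂μ := by ring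

theorem eLpNorm_inv_one_add_norm_mul_norm_le (hE : 2 < finrank ℝ E) (hw : ContDiff ℝ 1 w)
    (hwc : HasCompactSupport w) :
    eLpNorm (fun x ↦ (1 + ‖x‖)⁻¹ * ‖w x‖) 2 μ ≤
      ENNReal.ofReal (2 / ((finrank ℝ E : ℝ) - 2)) * eLpNorm (fderiv ℝ w) 2 μ := by
  have hweight : MemLp (fun x ↦ (1 + ‖x‖)⁻¹ * ‖w x‖) 2 μ :=
    (continuous_inv_one_add_norm.mul hw.continuous.norm).memLp_of_hasCompactSupport
      hwc.norm.mul_left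
  have hgrad : MemLp (fderiv ℝ w) 2 μ :=
    (hw.continuous_fderiv one_ne_zero).memLp_of_hasCompactSupport (hwc.fderiv ℝ)
  have hpointwise x : ‖(1 + ‖x‖)⁻¹ * ‖w x‖‖ ^ 2 ≤ ‖w x‖ ^ 2 * (1 + ‖x‖ ^ 2)⁻¹ := by
    rw [Real.norm_of_nonneg (by positivity), mul_pow, inv_pow, mul_comm]
    gcongr
    nlinarith [norm_nonneg x]
  rw [← ENNReal.pow_le_pow_left_iff two_ne_zero, mul_pow, eLpNorm_two_sq_eq_ofReal_integral hweight,
    eLpNorm_two_sq_eq_ofReal_integral hgrad,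
    ← ENNReal.ofReal_pow (div_nonneg zero_le_two (sub_nonneg.2 (by exact_mod_cast hE.le))),
    ← ENNReal.ofReal_mul (by positivity)]
  exact ENNReal.ofReal_le_ofReal <|
    (integral_mono (hweight.integrable_norm_pow two_ne_zero)
      (integrable_norm_sq_mul_inv_one_add_norm_sq hw.continuous hwc) hpointwise).trans
      (integral_norm_sq_mul_inv_one_add_norm_sq_le hE hw hwc)

theorem lintegral_enorm_sq_mul_enorm_le_of_hardy {G : Type*} [NormedAddCommGroup G] {v : E → G}
    (hE : 2 < finrank ℝ E) (hv : AEStronglyMeasurable v μ) (hw : ContDiff ℝ 1 w)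
    (hwc : HasCompactSupport w) :
    ∫⁻ x, ‖v x‖ₑ ^ 2 * ‖w x‖ₑ ∂μ ≤ ENNReal.ofReal (2 / ((finrank ℝ E : ℝ) - 2)) *
      (eLpNorm v ⊤ μ * eLpNorm (fun x ↦ (1 + ‖x‖) * ‖v x‖) 2 μ * eLpNorm (fderiv ℝ w) 2 μ) := by
  have hsplit x : ‖v x‖ₑ ^ 2 * ‖w x‖ₑ =
      ‖v x‖ₑ * ‖(1 + ‖x‖) * ‖v x‖‖ₑ * ‖(1 + ‖x‖)⁻¹ * ‖w x‖‖ₑ := by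
    have hne : 1 + ‖x‖ ≠ 0 := by positivity
    calc ‖v x‖ₑ ^ 2 * ‖w x‖ₑ = ‖v x‖ₑ * ‖‖v x‖ * ‖w x‖‖ₑ := by
          rw [enorm_mul, enorm_norm, enorm_norm]
          ring
      _ = ‖v x‖ₑ * ‖((1 + ‖x‖) * ‖v x‖) * ((1 + ‖x‖)⁻¹ * ‖w x‖)‖ₑ := by
          congr 2
          field_simp
      _ = _ := by rw [enorm_mul, mul_assoc]
  calc ∫⁻ x, ‖v x‖ₑ ^ 2 * ‖w x‖ₑ ∂μ
      ≤ eLpNorm v ⊤ μ * eLpNorm (fun x ↦ (1 + ‖x‖) * ‖v x‖) 2 μ *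
          eLpNorm (fun x ↦ (1 + ‖x‖)⁻¹ * ‖w x‖) 2 μ := by
        simp only [hsplit]
        exact lintegral_enorm_mul_mul_le ⊤ 2 2 1 hv
          ((continuous_const.add continuous_norm).aestronglyMeasurable.mul hv.norm)
          (continuous_inv_one_add_norm.mul hw.continuous.norm).aestronglyMeasurable
    _ ≤ eLpNorm v ⊤ μ * eLpNorm (fun x ↦ (1 + ‖x‖) * ‖v x‖) 2 μ *
          (ENNReal.ofReal (2 / ((finrank ℝ E : ℝ) - 2)) * eLpNorm (fderiv ℝ w) 2 μ) := by
        gcongr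
        exact eLpNorm_inv_one_add_norm_mul_norm_le hE hw hwc
    _ = _ := by ring

end Hardy

section Sobolev

variable {E F G : Type*} [NormedAddCommGroup E] [NormedSpace ℝ E] [FiniteDimensional ℝ E]
  [MeasurableSpace E] [BorelSpace E] {μ : Measure E} [μ.IsAddHaarMeasure] [NormedAddCommGroup F]
  [NormedSpace ℝ F] [FiniteDimensional ℝ F] [NormedAddCommGroup G] {w : E → F}

theorem eLpNorm_six_le_eLpNorm_fderiv_two (hE : finrank ℝ E = 3) (hw : ContDiff ℝ 1 w)
    (hwc : HasCompactSupport w) :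
    eLpNorm w 6 μ ≤ SNormLESNormFDerivOfEqConst F μ 2 * eLpNorm (fderiv ℝ w) 2 μ :=
  eLpNorm_le_eLpNorm_fderiv_of_eq μ hw hwc (p := 2) (p' := 6) one_le_two (by simp [hE])
    (by rw [hE]; norm_num)

theorem lintegral_enorm_cube_le_of_sobolev (hE : finrank ℝ E = 3) (hw : ContDiff ℝ 1 w)
    (hwc : HasCompactSupport w) :
    ∫⁻ x, ‖w x‖ₑ ^ 3 ∂μ ≤ (SNormLESNormFDerivOfEqConst F μ 2 : ℝ≥0∞) ^ (3 / 2 : ℝ) *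
      (eLpNorm w 2 μ ^ (3 / 2 : ℝ) * eLpNorm (fderiv ℝ w) 2 μ ^ (3 / 2 : ℝ)) := by
  have hinterp : eLpNorm w 3 μ ≤ eLpNorm w 2 μ ^ (1 / 2 : ℝ) * eLpNorm w 6 μ ^ (1 / 2 : ℝ) :=
    eLpNorm_le_eLpNorm_rpow_mul_eLpNorm_rpow hw.continuous.aestronglyMeasurable one_half_pos
      one_half_pos (add_halves 1) <| by
        rw [← ENNReal.toReal_eq_toReal_iff' (by finiteness) (by simp),
          ENNReal.toReal_add (by finiteness) (by finiteness)]
        norm_num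
  calc ∫⁻ x, ‖w x‖ₑ ^ 3 ∂μ
      = eLpNorm w 3 μ ^ (3 : ℝ) := by
        simpa using (eLpNorm_nnreal_pow_eq_lintegral (f := w) (μ := μ) (p := 3) three_ne_zero).symm
    _ ≤ (eLpNorm w 2 μ ^ (1 / 2 : ℝ) * eLpNorm w 6 μ ^ (1 / 2 : ℝ)) ^ (3 : ℝ) := by gcongr
    _ = eLpNorm w 2 μ ^ (3 / 2 : ℝ) * eLpNorm w 6 μ ^ (3 / 2 : ℝ) := by
        rw [ENNReal.mul_rpow_of_nonneg _ _ zero_le_three, ← ENNReal.rpow_mul, ← ENNReal.rpow_mul]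
        norm_num
    _ ≤ eLpNorm w 2 μ ^ (3 / 2 : ℝ) *
          (SNormLESNormFDerivOfEqConst F μ 2 * eLpNorm (fderiv ℝ w) 2 μ) ^ (3 / 2 : ℝ) := by
        gcongr
        exact eLpNorm_six_le_eLpNorm_fderiv_two hE hw hwc
    _ = _ := by
        rw [ENNReal.mul_rpow_of_nonneg _ _ (by norm_num)]
        ring

theorem lintegral_enorm_sq_mul_enorm_le_of_sobolev {v : E → G} (hE : finrank ℝ E = 3)
    (hv : AEStronglyMeasurable v μ) (hw : ContDiff ℝ 1 w) (hwc : HasCompactSupport w) :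
    ∫⁻ x, ‖w x‖ₑ ^ 2 * ‖v x‖ₑ ∂μ ≤ SNormLESNormFDerivOfEqConst F μ 2 *
      (eLpNorm v 3 μ * eLpNorm w 2 μ * eLpNorm (fderiv ℝ w) 2 μ) := by
  have : ENNReal.HolderTriple 3 6 2 := ⟨by
    rw [← ENNReal.toReal_eq_toReal_iff' (by simp) (by simp),
      ENNReal.toReal_add (by simp) (by simp)]
    norm_num⟩
  have hw' : AEStronglyMeasurable w μ := hw.continuous.aestronglyMeasurable
  calc ∫⁻ x, ‖w x‖ₑ ^ 2 * ‖v x‖ₑ ∂μ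
      = ∫⁻ x, ‖w x‖ₑ * ‖v x‖ₑ * ‖w x‖ₑ ∂μ := by simp only [sq, mul_right_comm]
    _ ≤ eLpNorm w 2 μ * eLpNorm v 3 μ * eLpNorm w 6 μ :=
        lintegral_enorm_mul_mul_le 2 3 6 2 hw' hv hw'
    _ ≤ eLpNorm w 2 μ * eLpNorm v 3 μ *
          (SNormLESNormFDerivOfEqConst F μ 2 * eLpNorm (fderiv ℝ w) 2 μ) := by
        gcongr
        exact eLpNorm_six_le_eLpNorm_fderiv_two hE hw hwc
    _ = _ := by ring

end Sobolev

section Nonlinearity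

/-- The perturbative nonlinearity `2|v|²w + v²w̄ + |w|²w + |w|²v` around the periodic wave `v`, as a
function of the values of `v` and `w` at a point. -/
def nonlinearity (v w : ℂ) : ℂ :=
  2 * ((‖v‖ ^ 2 : ℝ) : ℂ) * w + v ^ 2 * (starRingEnd ℂ) w + ((‖w‖ ^ 2 : ℝ) : ℂ) * w +
    ((‖w‖ ^ 2 : ℝ) : ℂ) * v

theorem norm_nonlinearity_le (v w : ℂ) :
    ‖nonlinearity v w‖ ≤ 3 * (‖v‖ ^ 2 * ‖w‖) + ‖w‖ ^ 3 + ‖w‖ ^ 2 * ‖v‖ := by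
  refine norm_add₄_le.trans_eq ?_
  simp only [norm_mul, norm_pow, Complex.norm_real, norm_norm, RCLike.norm_conj, Complex.norm_ofNat]
  ring

theorem enorm_nonlinearity_le (v w : ℂ) :
    ‖nonlinearity v w‖ₑ ≤ 3 * (‖v‖ₑ ^ 2 * ‖w‖ₑ) + ‖w‖ₑ ^ 3 + ‖w‖ₑ ^ 2 * ‖v‖ₑ := by
  simpa only [enorm_eq_nnnorm] using mod_cast norm_nonlinearity_le v w

variable {E : Type*} [NormedAddCommGroup E] [InnerProductSpace ℝ E] [FiniteDimensional ℝ E]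
  [MeasurableSpace E] [BorelSpace E] {μ : Measure E} [μ.IsAddHaarMeasure] {v w : E → ℂ}

theorem ennreal_mul_add_mul_add_mul_le (a b c x y z : ℝ≥0∞) :
    a * x + b * y + c * z ≤ (a + b + c) * (x + y + z) := by
  rw [mul_add, mul_add]
  gcongr
  · exact le_add_right le_self_add
  · exact le_add_right le_add_self
  · exact le_add_self

theorem continuous_nonlinearity : Continuous (Function.uncurry nonlinearity) := by
  unfold nonlinearity
  fun_prop

theorem lintegral_enorm_nonlinearity_le (hE : finrank ℝ E = 3) (hv : AEStronglyMeasurable v μ)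
    (hw : ContDiff ℝ 1 w) (hwc : HasCompactSupport w) :
    ∫⁻ x, ‖nonlinearity (v x) (w x)‖ₑ ∂μ ≤
      (6 + (SNormLESNormFDerivOfEqConst ℂ μ 2 : ℝ≥0∞) ^ (3 / 2 : ℝ) +
          SNormLESNormFDerivOfEqConst ℂ μ 2) *
        (eLpNorm v ⊤ μ * eLpNorm (fun x ↦ (1 + ‖x‖) * ‖v x‖) 2 μ * eLpNorm (fderiv ℝ w) 2 μ +
          eLpNorm w 2 μ ^ (3 / 2 : ℝ) * eLpNorm (fderiv ℝ w) 2 μ ^ (3 / 2 : ℝ) +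
          eLpNorm v 3 μ * eLpNorm w 2 μ * eLpNorm (fderiv ℝ w) 2 μ) := by
  have hhardy := lintegral_enorm_sq_mul_enorm_le_of_hardy (by simp [hE]) hv hw hwc
  have hcube := lintegral_enorm_cube_le_of_sobolev (μ := μ) hE hw hwc
  have hquad := lintegral_enorm_sq_mul_enorm_le_of_sobolev hE hv hw hwc
  have hconst : ENNReal.ofReal (2 / ((finrank ℝ E : ℝ) - 2)) = 2 := by
    rw [hE]
    norm_num
  have hcube_meas : AEMeasurable (fun x ↦ ‖w x‖ₑ ^ 3) μ :=
    hw.continuous.aestronglyMeasurable.enorm.pow_const 3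
  have hquad_meas : AEMeasurable (fun x ↦ ‖w x‖ₑ ^ 2 * ‖v x‖ₑ) μ :=
    (hw.continuous.aestronglyMeasurable.enorm.pow_const 2).mul hv.enorm
  rw [hconst] at hhardy
  calc ∫⁻ x, ‖nonlinearity (v x) (w x)‖ₑ ∂μ
      ≤ ∫⁻ x, 3 * (‖v x‖ₑ ^ 2 * ‖w x‖ₑ) + ‖w x‖ₑ ^ 3 + ‖w x‖ₑ ^ 2 * ‖v x‖ₑ ∂μ :=
        lintegral_mono fun x ↦ enorm_nonlinearity_le (v x) (w x)
    _ = 3 * ∫⁻ x, ‖v x‖ₑ ^ 2 * ‖w x‖ₑ ∂μ + ∫⁻ x, ‖w x‖ₑ ^ 3 ∂μ +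
          ∫⁻ x, ‖w x‖ₑ ^ 2 * ‖v x‖ₑ ∂μ := by
        rw [lintegral_add_right' _ hquad_meas, lintegral_add_right' _ hcube_meas,
          lintegral_const_mul' _ _ ENNReal.ofNat_ne_top]
    _ ≤ 3 * (2 * _) + _ * _ + _ * _ :=
        add_le_add_three (mul_le_mul_right hhardy 3) hcube hquad
    _ = 6 * _ + _ * _ + _ * _ := by
        rw [← mul_assoc]
        norm_num
    _ ≤ _ := ennreal_mul_add_mul_add_mul_le _ _ _ _ _ _

end Nonlinearity

theorem nonlinearity_L1_estimate_general {E : Type*} [NormedAddCommGroup E] [InnerProductSpace ℝ E]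
    [FiniteDimensional ℝ E] [MeasurableSpace E] [BorelSpace E] (μ : Measure E) [μ.IsAddHaarMeasure]
    (hE : finrank ℝ E = 3) :
    ∃ C : ℝ, 0 < C ∧ ∀ v w : E → ℂ,
      MemLp v ⊤ μ → MemLp (fun x ↦ (1 + ‖x‖) * ‖v x‖) 2 μ →
      ContDiff ℝ 1 w → HasCompactSupport w →
      ∫ x, ‖nonlinearity (v x) (w x)‖ ∂μ ≤
        C * ((eLpNorm v ⊤ μ).toReal * (eLpNorm (fun x ↦ (1 + ‖x‖) * ‖v x‖) 2 μ).toReal *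
              (eLpNorm (fderiv ℝ w) 2 μ).toReal +
            (eLpNorm w 2 μ).toReal ^ (3 / 2 : ℝ) *
              (eLpNorm (fderiv ℝ w) 2 μ).toReal ^ (3 / 2 : ℝ) +
            (eLpNorm v 3 μ).toReal * (eLpNorm w 2 μ).toReal *
              (eLpNorm (fderiv ℝ w) 2 μ).toReal) := by
  let K : ℝ≥0 := SNormLESNormFDerivOfEqConst ℂ μ 2
  refine ⟨6 + K ^ (3 / 2 : ℝ) + K, by positivity, fun v w hv hv' hw hwc ↦ ?_⟩
  have hmeas : AEStronglyMeasurable (fun x ↦ nonlinearity (v x) (w x)) μ :=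
    continuous_nonlinearity.comp_aestronglyMeasurable₂ hv.1 hw.continuous.aestronglyMeasurable
  have hv_top := hv.eLpNorm_ne_top
  have hv_weight := hv'.eLpNorm_ne_top
  have hv_three := (memLp_three_of_memLp_one_add_norm_mul_two hv hv').eLpNorm_ne_top
  have hw_two := (hw.continuous.memLp_of_hasCompactSupport hwc (p := 2) (μ := μ)).eLpNorm_ne_top
  have hw_grad := ((hw.continuous_fderiv one_ne_zero).memLp_of_hasCompactSupport (hwc.fderiv ℝ)
    (p := 2) (μ := μ)).eLpNorm_ne_top
  rw [integral_norm_eq_lintegral_enorm hmeas]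
  refine (ENNReal.toReal_mono (by finiteness)
    (lintegral_enorm_nonlinearity_le hE hv.1 hw hwc)).trans_eq ?_
  rw [ENNReal.toReal_mul]
  iterate 4 rw [ENNReal.toReal_add (by finiteness) (by finiteness)]
  simp only [ENNReal.toReal_mul, ← ENNReal.toReal_rpow, ENNReal.toReal_ofNat, ENNReal.coe_toReal, K]

/-- `L¹` estimate of the nonlinearity `2|v|²w + v²w̄ + |w|²w + |w|²v`:
`∫ |2|v|²w + v²w̄ + |w|²w + |w|²v| ≤
  C (‖v‖_∞ ‖(1+|x|)v‖₂ ‖∇w‖₂ + ‖w‖₂^{3/2} ‖∇w‖₂^{3/2} + ‖v‖₃ ‖w‖₂ ‖∇w‖₂)`. -/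
theorem nonlinearity_L1_estimate :
    ∃ C : ℝ, 0 < C ∧ ∀ v w : E³ → ℂ,
      ContDiff ℝ 1 v → HasCompactSupport v →
      ContDiff ℝ 1 w → HasCompactSupport w →
      ∫ x : E³, ‖2 * ((‖v x‖ ^ 2 : ℝ) : ℂ) * w x + (v x) ^ 2 * (starRingEnd ℂ) (w x) +
          ((‖w x‖ ^ 2 : ℝ) : ℂ) * w x + ((‖w x‖ ^ 2 : ℝ) : ℂ) * v x‖ ≤
        C * ((eLpNorm v ⊤ (volume : Measure E³)).toReal *
              (eLpNorm (fun x : E³ => (1 + ‖x‖) * ‖v x‖) 2 (volume : Measure E³)).toReal *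
              (eLpNorm (fderiv ℝ w) 2 (volume : Measure E³)).toReal +
            (eLpNorm w 2 (volume : Measure E³)).toReal ^ (3/2 : ℝ) *
              (eLpNorm (fderiv ℝ w) 2 (volume : Measure E³)).toReal ^ (3/2 : ℝ) +
            (eLpNorm v 3 (volume : Measure E³)).toReal *
              (eLpNorm w 2 (volume : Measure E³)).toReal *
              (eLpNorm (fderiv ℝ w) 2 (volume : Measure E³)).toReal) := by
  obtain ⟨C, hC, hbound⟩ := nonlinearity_L1_estimate_general (volume : Measure E³) (by simp)
  refine ⟨C, hC, fun v w hv hvc hw hwc ↦ hbound v w (hv.continuous.memLp_of_hasCompactSupport hvc)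
    ?_ hw hwc⟩
  exact ((continuous_const.add continuous_norm).mul hv.continuous.norm).memLp_of_hasCompactSupport
    hvc.norm.mul_left
end
end
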